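/- arXiv:0802.2550 — 6 statements merged into one kernel-verified Lean document; each statement's English description precedes it below -/
import Mathlib

section
/- For every integer k ≥ 2, there exists a natural number n with 3·n ≤ 4·⌊log₂ k⌋ + 6 and a topological space on a set of n points having exactly k open sets. (Equivalently, m(k) ≤ (4/3)·⌊log₂ k⌋ + 2.) -/
/-!
Adjoin one point to a finite space so that an open set containing it must contain a given `U`, and
an open set avoiding it must lie in a given `D`. The new number of open sets is the number of old
open sets above `U` plus the number of old open sets below `D`. In particular:

* an isolated point doubles the count `k`;
* a point below the complement of `D` turns `k` into `k + 7` when `D` contains exactly 7 open sets;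
* a fork, that is, two isolated points followed by a point above both of them and above `J`, turns
  `k` into `4k + a` when exactly `a` open sets contain `J`.

Carry along sets which exactly 3 and exactly 5 open sets contain, and a set containing exactly 7.
The first move keeps these counts. So does the second, because the new point is forced into every
open set above the old witnesses. The third keeps the last witness and makes new ones for 3 and 5:
above the complement of the three new points, the open sets form a copy of the 5 open sets of the
fork. From `q` one thus reaches `2q` with one more point, and `8q + 1`, `8q + 3`, `8q + 5`, `8q + 7`
with four more points, while `⌊log₂⌋` grows by 1 and by 3: the bound `3n ≤ 4⌊log₂ k⌋ + 6` survives.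
The remaining small `k` come from explicit posets by the same moves.
-/

open Set Topology

namespace FewPoints

variable {α : Type*}

/-- The number of open sets `s` of the topology `t` with `L ⊆ s ⊆ H`; the bounds themselves need
not be open. -/
noncomputable def openCount (t : TopologicalSpace α) (L H : Set α) : ℕ :=
  {s ∈ Icc L H | IsOpen[t] s}.ncard

lemma openCount_univ_univ (t : TopologicalSpace α) : openCount t univ univ = 1 := by
  rw [openCount, Icc_self, sep_eq_self_iff_mem_true.2 (by simp), ncard_singleton]

/-! ### Adjoining a point -/

/-- The topology on `α` with one more point `none`, in which an open set containing `none` must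
contain `U` and an open set avoiding `none` must be contained in `D`. When open sets are read as
down-sets, `none` lies above the points of `U` and below the points outside `D`. -/
abbrev adjoinPoint (t : TopologicalSpace α) (U D : Set α) : TopologicalSpace (Option α) where
  IsOpen s := IsOpen[t] (some ⁻¹' s) ∧ (none ∈ s → U ⊆ some ⁻¹' s) ∧ (none ∉ s → some ⁻¹' s ⊆ D)
  isOpen_univ := by simp
  isOpen_inter := by
    rintro s s' ⟨hs, hU, hD⟩ ⟨hs', hU', hD'⟩
    refine ⟨hs.inter hs', fun h ↦ subset_inter (hU h.1) (hU' h.2), fun h ↦ ?_⟩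
    obtain h | h := not_and_or.1 h
    · exact inter_subset_left.trans (hD h)
    · exact inter_subset_right.trans (hD' h)
  isOpen_sUnion := by
    intro S hS
    rw [preimage_sUnion]
    refine ⟨isOpen_biUnion fun s hs ↦ (hS s hs).1, ?_, fun h ↦ ?_⟩
    · rintro ⟨s, hs, h⟩
      exact ((hS s hs).2.1 h).trans (subset_biUnion_of_mem hs)
    · exact iUnion₂_subset fun s hs ↦ (hS s hs).2.2 fun h' ↦ h ⟨s, hs, h'⟩

lemma preimage_some_image_some (A : Set α) : some ⁻¹' (some '' A) = A :=
  preimage_image_eq _ (Option.some_injective α)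

lemma preimage_some_insert_none (s : Set (Option α)) :
    some ⁻¹' insert none s = some ⁻¹' s := by
  ext; simp

lemma subset_image_some_iff {L : Set (Option α)} {A : Set α} :
    L ⊆ some '' A ↔ none ∉ L ∧ some ⁻¹' L ⊆ A := by
  simp [subset_def, Option.forall]

lemma subset_insert_none_image_some_iff {L : Set (Option α)} {A : Set α} :
    L ⊆ insert none (some '' A) ↔ some ⁻¹' L ⊆ A := by
  simp [subset_def, Option.forall]

lemma isOpen_adjoinPoint_image_some {t : TopologicalSpace α} {U D A : Set α} :
    IsOpen[adjoinPoint t U D] (some '' A) ↔ IsOpen[t] A ∧ A ⊆ D := by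
  change IsOpen[t] _ ∧ _ ↔ _
  simp [preimage_some_image_some]

lemma isOpen_adjoinPoint_insert_none {t : TopologicalSpace α} {U D A : Set α} :
    IsOpen[adjoinPoint t U D] (insert none (some '' A)) ↔ IsOpen[t] A ∧ U ⊆ A := by
  change IsOpen[t] _ ∧ _ ↔ _
  simp [preimage_some_insert_none, preimage_some_image_some]

lemma image_some_injective : Function.Injective fun A : Set α ↦ some '' A :=
  image_injective.2 (Option.some_injective α)

lemma insert_none_image_some_injective :
    Function.Injective fun A : Set α ↦ insert none (some '' A) :=
  Function.LeftInverse.injective (g := (some ⁻¹' ·)) fun A ↦ by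
    simp [preimage_some_insert_none, preimage_some_image_some]

lemma ncard_set_set_option [Finite α] (S : Set (Set (Option α))) :
    S.ncard = {A : Set α | some '' A ∈ S}.ncard +
      {A : Set α | insert none (some '' A) ∈ S}.ncard := by
  set S₀ := (fun A : Set α ↦ some '' A) '' {A | some '' A ∈ S}
  set S₁ := (fun A : Set α ↦ insert none (some '' A)) '' {A | insert none (some '' A) ∈ S}
  have hS : S = S₀ ∪ S₁ := by
    refine Subset.antisymm (fun s hs ↦ ?_)
      (union_subset (image_subset_iff.2 fun _ h ↦ h) (image_subset_iff.2 fun _ h ↦ h))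
    by_cases h : none ∈ s
    · have hs' : insert none (some '' (some ⁻¹' s)) = s := by ext (_ | x) <;> simp [h]
      exact .inr ⟨some ⁻¹' s, by rwa [mem_ofPred, hs'], hs'⟩
    · have hs' : some '' (some ⁻¹' s) = s := by ext (_ | x) <;> simp [h]
      exact .inl ⟨some ⁻¹' s, by rwa [mem_ofPred, hs'], hs'⟩
  have hdisj : Disjoint S₀ S₁ := by
    rw [disjoint_left]
    rintro _ ⟨A, -, rfl⟩ ⟨B, -, hB⟩
    have : none ∈ some '' A := hB.le (mem_insert none (some '' B))
    simp at this
  have hS₀ : S₀.ncard = {A : Set α | some '' A ∈ S}.ncard :=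
    ncard_image_of_injective _ image_some_injective
  have hS₁ : S₁.ncard = {A : Set α | insert none (some '' A) ∈ S}.ncard :=
    ncard_image_of_injective _ insert_none_image_some_injective
  rw [← hS₀, ← hS₁, ← ncard_union_eq hdisj, ← hS]

open scoped Classical in
lemma openCount_adjoinPoint [Finite α] (t : TopologicalSpace α) (U D : Set α)
    (L H : Set (Option α)) :
    openCount (adjoinPoint t U D) L H =
      (if none ∈ L then 0 else openCount t (some ⁻¹' L) (some ⁻¹' H ∩ D)) +
      (if none ∈ H then openCount t (some ⁻¹' L ∪ U) (some ⁻¹' H) else 0) := by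
  rw [openCount, ncard_set_set_option]
  congr 1
  · split_ifs with h
    · simp [subset_image_some_iff, h]
    · congr 1
      ext A
      simp [subset_image_some_iff, h, isOpen_adjoinPoint_image_some, and_assoc, and_comm,
        and_left_comm]
  · split_ifs with h
    · congr 1
      ext A
      simp [subset_insert_none_image_some_iff, insert_subset_iff, h,
        isOpen_adjoinPoint_insert_none, and_assoc, and_comm]
    · simp [insert_subset_iff, h]

/-- The topology obtained from `t` by adjoining two isolated points and then a point above both of
them and above `J`. -/
abbrev adjoinFork (t : TopologicalSpace α) (J : Set α) :
    TopologicalSpace (Option (Option (Option α))) :=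
  adjoinPoint (adjoinPoint (adjoinPoint t ∅ univ) ∅ univ)
    (insert none (some '' insert none (some '' J))) univ

lemma openCount_adjoinFork [Finite α] (t : TopologicalSpace α) (J : Set α) :
    openCount (adjoinFork t J) ∅ univ = 4 * openCount t ∅ univ + openCount t J univ := by
  simp only [openCount_adjoinPoint, preimage_some_insert_none, preimage_some_image_some,
    mem_empty_iff_false, mem_univ, mem_insert_iff, mem_image, reduceCtorEq, and_false,
    exists_false, or_false, reduceIte, preimage_empty, preimage_univ, inter_self, union_self,
    union_insert, empty_union, union_empty, zero_add]
  ring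

/-! ### Extendable topologies -/

/-- The topology `t` carries the sets by which its number of open sets can be increased: two that
are contained in exactly 3 and in exactly 5 open sets, and one that contains exactly 7. -/
structure Extendable (t : TopologicalSpace α) : Prop where
  three_above : ∃ U, openCount t U univ = 3
  five_above : ∃ U, openCount t U univ = 5
  seven_below : ∃ D, openCount t ∅ D = 7

lemma Extendable.adjoinPoint_empty [Finite α] {t : TopologicalSpace α} (ht : Extendable t)
    {D D₇ : Set α} (hD₇ : openCount t ∅ D₇ = 7) (hD : D₇ ⊆ D) :
    Extendable (adjoinPoint t ∅ D) := by
  obtain ⟨⟨U₃, hU₃⟩, ⟨U₅, hU₅⟩, -⟩ := ht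
  refine ⟨⟨insert none (some '' U₃), ?_⟩, ⟨insert none (some '' U₅), ?_⟩, ⟨some '' D₇, ?_⟩⟩
  · simpa [openCount_adjoinPoint, preimage_some_insert_none, preimage_some_image_some]
  · simpa [openCount_adjoinPoint, preimage_some_insert_none, preimage_some_image_some]
  · simpa [openCount_adjoinPoint, preimage_some_image_some, inter_eq_left.2 hD]

lemma Extendable.adjoinFork [Finite α] {t : TopologicalSpace α} (ht : Extendable t)
    (J : Set α) : Extendable (adjoinFork t J) := by
  obtain ⟨D, hD⟩ := ht.seven_below
  refine ⟨⟨some '' insert none (some '' (some '' univ)), ?_⟩,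
    ⟨some '' (some '' (some '' univ)), ?_⟩, ⟨some '' (some '' (some '' D)), ?_⟩⟩
  · simp [openCount_adjoinPoint, preimage_some_insert_none, preimage_some_image_some,
      openCount_univ_univ]
  · simp [openCount_adjoinPoint, preimage_some_insert_none, preimage_some_image_some,
      openCount_univ_univ]
  · simpa [openCount_adjoinPoint, preimage_some_image_some]

/-- Some extendable topology on `n` points has exactly `k` open sets. -/
def ExtendableOn (n k : ℕ) : Prop :=
  ∃ (α : Type) (_ : Finite α) (t : TopologicalSpace α),
    Nat.card α = n ∧ openCount t ∅ univ = k ∧ Extendable t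

lemma ExtendableOn.two_mul {n k : ℕ} (h : ExtendableOn n k) : ExtendableOn (n + 1) (2 * k) := by
  obtain ⟨α, _, t, rfl, rfl, ht⟩ := h
  obtain ⟨D, hD⟩ := ht.seven_below
  refine ⟨Option α, inferInstance, adjoinPoint t ∅ univ, Finite.card_option, ?_,
    ht.adjoinPoint_empty hD (subset_univ D)⟩
  simp [openCount_adjoinPoint, _root_.two_mul]

lemma ExtendableOn.add_seven {n k : ℕ} (h : ExtendableOn n k) : ExtendableOn (n + 1) (k + 7) := by
  obtain ⟨α, _, t, rfl, rfl, ht⟩ := h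
  obtain ⟨D, hD⟩ := ht.seven_below
  refine ⟨Option α, inferInstance, adjoinPoint t ∅ D, Finite.card_option, ?_,
    ht.adjoinPoint_empty hD Subset.rfl⟩
  simp [openCount_adjoinPoint, hD, add_comm]

lemma ExtendableOn.four_mul_add {n k a : ℕ} (h : ExtendableOn n k)
    (ha : a = 1 ∨ a = 3 ∨ a = 5 ∨ a = 7) : ExtendableOn (n + 3) (4 * k + a) := by
  by_cases ha₇ : a = 7
  · have h' := h.two_mul.two_mul.add_seven
    rwa [← mul_assoc, ← ha₇] at h'
  obtain ⟨α, _, t, rfl, rfl, ht⟩ := h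
  obtain ⟨J, rfl⟩ : ∃ J, openCount t J univ = a := by
    obtain rfl | rfl | rfl | rfl := ha
    · exact ⟨univ, openCount_univ_univ t⟩
    · exact ht.three_above
    · exact ht.five_above
    · contradiction
  exact ⟨Option (Option (Option α)), inferInstance, adjoinFork t J, by simp [Finite.card_option],
    openCount_adjoinFork t J, ht.adjoinFork J⟩

/-! ### Topologies on `Fin n` -/

/-- Some topology on `Fin n` has exactly `k` open sets. -/
def ObtainableOn (n k : ℕ) : Prop :=
  ∃ t : TopologicalSpace (Fin n), Nat.card {s : Set (Fin n) // t.IsOpen s} = k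

lemma obtainableOn_openCount {n : ℕ} (t : TopologicalSpace α) (e : α ≃ Fin n) :
    ObtainableOn n (openCount t ∅ univ) := by
  refine ⟨t.coinduced e, ?_⟩
  rw [openCount, ← Nat.card_coe_set_eq]
  refine Nat.card_congr ((Equiv.Set.congr e).symm.subtypeEquiv fun s ↦ ?_)
  change IsOpen[t.coinduced e] s ↔ _
  simp [isOpen_coinduced, e.image_symm_eq_preimage]

lemma ExtendableOn.obtainableOn {n k : ℕ} (h : ExtendableOn n k) : ObtainableOn n k := by
  obtain ⟨α, _, t, hn, rfl, -⟩ := h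
  exact obtainableOn_openCount t (Finite.equivFinOfCardEq hn)

/-- The topology whose open sets are the sets `s` such that `i ∈ s` implies `j ∈ s` for every edge
`(i, j)`. Edges can be read as `j < i`, and open sets as down-sets. -/
abbrev edgeTopology (E : Set (α × α)) : TopologicalSpace α where
  IsOpen s := ∀ e ∈ E, e.1 ∈ s → e.2 ∈ s
  isOpen_univ := by simp
  isOpen_inter s s' hs hs' e he h := ⟨hs e he h.1, hs' e he h.2⟩
  isOpen_sUnion S hS e he := fun ⟨s, hs, h⟩ ↦ ⟨s, hs, hS s hs e he h⟩

/-- A decidable version of `openCount` for `edgeTopology`. -/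
def edgeOpenCount [Fintype α] [DecidableEq α] (E : Finset (α × α)) (L H : Finset α) : ℕ :=
  Finset.card {s ∈ Finset.Icc L H | ∀ e ∈ E, e.1 ∈ s → e.2 ∈ s}

lemma openCount_edgeTopology [Fintype α] [DecidableEq α] (E : Finset (α × α)) (L H : Finset α) :
    openCount (edgeTopology (E : Set (α × α))) L H = edgeOpenCount E L H := by
  have isOpen_iff (s : Set α) :
      IsOpen[edgeTopology (E : Set (α × α))] s ↔ ∀ e ∈ E, e.1 ∈ s → e.2 ∈ s := .rfl
  rw [openCount, edgeOpenCount, ← ncard_coe_finset,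
    ← ncard_image_of_injective _ Finset.coe_injective]
  congr 1
  ext s
  lift s to Finset α using toFinite s
  simp [isOpen_iff]

lemma obtainableOn_of_edges {n k : ℕ} (E : Finset (Fin n × Fin n))
    (hk : edgeOpenCount E ∅ Finset.univ = k) : ObtainableOn n k := by
  rw [← hk, ← openCount_edgeTopology, Finset.coe_empty, Finset.coe_univ]
  exact obtainableOn_openCount (edgeTopology _) (Equiv.refl _)

lemma extendableOn_of_edges {n k : ℕ} (E : Finset (Fin n × Fin n)) (U₃ U₅ D : Finset (Fin n))
    (h : edgeOpenCount E ∅ Finset.univ = k ∧ edgeOpenCount E U₃ Finset.univ = 3 ∧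
      edgeOpenCount E U₅ Finset.univ = 5 ∧ edgeOpenCount E ∅ D = 7) :
    ExtendableOn n k := by
  simp only [← openCount_edgeTopology, Finset.coe_univ, Finset.coe_empty] at h
  obtain ⟨hk, h₃, h₅, h₇⟩ := h
  exact ⟨Fin n, inferInstance, edgeTopology E, Nat.card_fin n, hk, ⟨⟨U₃, h₃⟩, ⟨U₅, h₅⟩, ⟨D, h₇⟩⟩⟩

lemma extendableOn_four_seven : ExtendableOn 4 7 :=
  extendableOn_of_edges {(1, 0), (3, 1), (3, 2)} {1} {0} {0, 1, 2, 3} (by decide)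

lemma extendableOn_five {k : ℕ} (h₈ : 8 ≤ k) (h₁₂ : k ≤ 12) : ExtendableOn 5 k := by
  interval_cases k
  · exact extendableOn_of_edges {(1, 0), (3, 1), (3, 2), (4, 3)} {1, 2} {2} {0, 1, 2, 3}
      (by decide)
  · exact extendableOn_of_edges {(1, 0), (2, 0), (3, 1), (3, 2), (4, 1)} {4} {2} {0, 1, 2, 4}
      (by decide)
  · exact extendableOn_of_edges {(1, 0), (3, 1), (3, 2), (4, 1)} {4} {0, 2} {0, 1, 2, 3}
      (by decide)
  · exact extendableOn_of_edges {(1, 0), (3, 2), (4, 1), (4, 2)} {0, 3} {1} {0, 1, 2, 4}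
      (by decide)
  · exact extendableOn_of_edges {(1, 0), (2, 0), (4, 1), (4, 3)} {1, 2} {2} {0, 1, 3, 4}
      (by decide)

lemma extendableOn_six_thirteen : ExtendableOn 6 13 :=
  extendableOn_of_edges {(1, 0), (3, 2), (4, 1), (4, 2), (5, 4)} {1, 3} {3} {0, 1, 2, 4}
    (by decide)

/-! ### Logarithmically many points -/

/-- Some extendable topology on at most `(4 ⌊log₂ k⌋ + c) / 3` points has exactly `k` open sets. -/
def ExtendableWithin (c k : ℕ) : Prop :=
  ∃ n, 3 * n ≤ 4 * Nat.log 2 k + c ∧ ExtendableOn n k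

lemma log_add_le_log_of_pow_mul_le {b q k j : ℕ} (hb : 1 < b) (hq : q ≠ 0) (h : b ^ j * q ≤ k) :
    Nat.log b q + j ≤ Nat.log b k := by
  apply Nat.le_log_of_pow_le hb
  calc b ^ (Nat.log b q + j) = b ^ j * b ^ Nat.log b q := by rw [pow_add, mul_comm]
    _ ≤ b ^ j * q := by gcongr; exact Nat.pow_log_le_self b hq
    _ ≤ k := h

lemma ExtendableWithin.of_move {c c' q k m j : ℕ} (h : ExtendableWithin c q)
    (move : ∀ {n}, ExtendableOn n q → ExtendableOn (n + m) k) (hq : q ≠ 0) (hk : 2 ^ j * q ≤ k)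
    (hc : c + 3 * m ≤ 4 * j + c') : ExtendableWithin c' k := by
  obtain ⟨n, hn, hnq⟩ := h
  have hlog := log_add_le_log_of_pow_mul_le one_lt_two hq hk
  exact ⟨n + m, by omega, move hnq⟩

lemma extendableWithin_three {k : ℕ} (h₈ : 8 ≤ k) (h₁₂ : k ≤ 12) : ExtendableWithin 3 k := by
  have hlog : 3 ≤ Nat.log 2 k := Nat.le_log_of_pow_le one_lt_two h₈
  exact ⟨5, by omega, extendableOn_five h₈ h₁₂⟩

lemma extendableWithin_four {k : ℕ} (h₇ : 7 ≤ k) (h₁₂ : k ≤ 12) : ExtendableWithin 4 k := by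
  obtain rfl | h₈ := h₇.eq_or_lt
  · have hlog : 2 ≤ Nat.log 2 7 := Nat.le_log_of_pow_le one_lt_two (by norm_num)
    exact ⟨4, by omega, extendableOn_four_seven⟩
  · obtain ⟨n, hn, h⟩ := extendableWithin_three h₈ h₁₂
    exact ⟨n, by omega, h⟩

lemma extendableWithin_six_of_lt_fourteen {k : ℕ} (h₇ : 7 ≤ k) (h₁₄ : k < 14) :
    ExtendableWithin 6 k := by
  obtain h₁₂ | rfl : k ≤ 12 ∨ k = 13 := by omega
  · obtain ⟨n, hn, h⟩ := extendableWithin_four h₇ h₁₂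
    exact ⟨n, by omega, h⟩
  · have hlog : 3 ≤ Nat.log 2 13 := Nat.le_log_of_pow_le one_lt_two (by norm_num)
    exact ⟨6, by omega, extendableOn_six_thirteen⟩

lemma extendableWithin_six_of_odd_of_lt {k : ℕ} (hk : k % 2 = 1) (h₁₄ : 14 ≤ k) (h₅₆ : k < 56) :
    ExtendableWithin 6 k := by
  obtain h₂₀ | h₂₀ := lt_or_ge k 20
  · obtain ⟨q, rfl⟩ : ∃ q, k = q + 7 := ⟨k - 7, by omega⟩
    exact (extendableWithin_three (k := q) (by omega) (by omega)).of_move (j := 0)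
      .add_seven (by omega) (by omega) le_rfl
  obtain h₂₈ | h₂₈ := lt_or_ge k 28
  · obtain ⟨q, rfl⟩ : ∃ q, k = 2 * q + 7 := ⟨(k - 7) / 2, by omega⟩
    exact (extendableWithin_four (k := q) (by omega) (by omega)).of_move (m := 2) (j := 1)
      (fun h ↦ h.two_mul.add_seven) (by omega) (by omega) le_rfl
  · obtain ⟨q, a, rfl, h₇, h₁₂, ha⟩ : ∃ q a, k = 4 * q + a ∧ 7 ≤ q ∧ q ≤ 12 ∧
        (a = 1 ∨ a = 3 ∨ a = 5 ∨ a = 7) :=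
      ⟨min (k / 4) 12, k - 4 * min (k / 4) 12, by omega⟩
    exact (extendableWithin_four h₇ h₁₂).of_move (j := 2)
      (fun h ↦ h.four_mul_add ha) (by omega) (by omega) (by norm_num)

lemma ExtendableWithin.two_mul {c q : ℕ} (h : ExtendableWithin c q) (hq : q ≠ 0) :
    ExtendableWithin c (2 * q) :=
  h.of_move (j := 1) .two_mul hq (by omega) (by omega)

lemma ExtendableWithin.eight_mul_add {c q a : ℕ} (h : ExtendableWithin c q) (hq : q ≠ 0)
    (ha : a = 1 ∨ a = 3 ∨ a = 5 ∨ a = 7) : ExtendableWithin c (8 * q + a) := by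
  refine h.of_move (m := 4) (j := 3) (fun hn ↦ ?_) hq (by omega) (by omega)
  simpa [← mul_assoc] using hn.two_mul.four_mul_add ha

lemma extendableWithin_six {k : ℕ} (h₇ : 7 ≤ k) : ExtendableWithin 6 k := by
  induction k using Nat.strong_induction_on with
  | _ k ih =>
    obtain h₁₄ | h₁₄ := lt_or_ge k 14
    · exact extendableWithin_six_of_lt_fourteen h₇ h₁₄
    obtain hk | hk := Nat.mod_two_eq_zero_or_one k
    · obtain ⟨q, rfl⟩ : ∃ q, k = 2 * q := ⟨k / 2, by omega⟩
      exact (ih q (by omega) (by omega)).two_mul (by omega)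
    obtain h₅₆ | h₅₆ := lt_or_ge k 56
    · exact extendableWithin_six_of_odd_of_lt hk h₁₄ h₅₆
    · obtain ⟨q, a, rfl, ha⟩ : ∃ q a, k = 8 * q + a ∧ (a = 1 ∨ a = 3 ∨ a = 5 ∨ a = 7) :=
        ⟨k / 8, k % 8, by omega⟩
      exact (ih q (by omega) (by omega)).eight_mul_add (by omega) ha

lemma exists_obtainableOn_of_lt_seven {k : ℕ} (h₂ : 2 ≤ k) (h₇ : k < 7) :
    ∃ n, 3 * n ≤ 4 * Nat.log 2 k + 6 ∧ ObtainableOn n k := by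
  interval_cases k
  · exact ⟨1, by norm_num, obtainableOn_of_edges ∅ (by decide)⟩
  · exact ⟨2, by norm_num, obtainableOn_of_edges {(1, 0)} (by decide)⟩
  · exact ⟨2, by norm_num, obtainableOn_of_edges ∅ (by decide)⟩
  · exact ⟨3, by norm_num, obtainableOn_of_edges {(2, 0), (2, 1)} (by decide)⟩
  · exact ⟨3, by norm_num, obtainableOn_of_edges {(1, 0)} (by decide)⟩

end FewPoints

/-- For every integer `k ≥ 2`, there exists a natural number `n` with
`3 * n ≤ 4 * ⌊log₂ k⌋ + 6` and a topology on a set of `n` points having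
exactly `k` open sets. -/
theorem m_le_four_thirds_log (k : ℕ) (hk : 2 ≤ k) :
    ∃ n : ℕ, 3 * n ≤ 4 * Nat.log 2 k + 6 ∧
      ∃ t : TopologicalSpace (Fin n), Nat.card {s : Set (Fin n) // t.IsOpen s} = k := by
  obtain h₇ | h₇ := lt_or_ge k 7
  · exact FewPoints.exists_obtainableOn_of_lt_seven hk h₇
  · obtain ⟨n, hn, h⟩ := FewPoints.extendableWithin_six h₇
    exact ⟨n, hn, h.obtainableOn⟩
end

section
/- For all integers n ≥ 2 and k with 2 ≤ k and k⁴ ≤ 2^{3(n−2)}, there exists a topological space on a set of n points having exactly k open sets. (Equivalently, T(n,k) > 0 for all k in [2, 2^{3(n−2)/4}], i.e., f(n) > 2^{3(n−2)/4}.) -/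
/-!
Suppose a space has `a` open sets. Adding `j` isolated points gives `2 ^ j * a` open sets. Adjoining
then one more point such that an open set missing it has to lie in a given set `U` adds the number
of open sets inside `U`. If `U` is a subset of the old space containing `w` open sets, then `j + 1`
points have been spent on turning `a` into `2 ^ j * a + w`. The last point together with one or two
of the isolated points forms a set with exactly `3` or `5` open subsets, so that `w` may be taken
from `{1, 3, 5}` in every step.

Strip digits off the end of `k`: a final bit `0` costs one point, and a final octal digit `1`, `3`
or `5` costs four points for three bits. If the final octal digit is `7`, six bits are stripped at
once for eight points: with six isolated points and two adjoined ones the number of open sets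
becomes `64 * a + 2 ^ b * u + 2 ^ c * v + min u v` with `u` and `v` in `{1, 3, 5}`, where the last
summand comes from the overlap of nested sets. So no bit costs more than `4 / 3` points. The
recursion stops below `415`, where the two spare points of the bound allow stripping digits in
base `4` at `3 / 2` points per bit.
-/

section Topology

open Set
open scoped Topology

variable {α β : Type*}

/-- The number of open sets of `t` contained in `s`, with `0` as junk value for infinitely many.
The size of the topology is `openCount t univ`. -/
noncomputable def openCount (t : TopologicalSpace α) (s : Set α) : ℕ :=
  {u | IsOpen[t] u ∧ u ⊆ s}.ncard

theorem openCount_empty (t : TopologicalSpace α) : openCount t ∅ = 1 := by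
  have : {u | IsOpen[t] u ∧ u ⊆ ∅} = {∅} := by
    ext u
    simpa [subset_empty_iff] using fun h : u = ∅ => h ▸ @isOpen_empty _ t
  rw [openCount, this, ncard_singleton]

/-- The disjoint union of the space `α` with a discrete space `ι`: being open is a condition on the
part in `α` only. -/
abbrev addIsolated (ι : Type*) (t : TopologicalSpace α) : TopologicalSpace (α ⊕ ι) :=
  t.coinduced Sum.inl

theorem openCount_addIsolated {ι : Type*} [Finite ι] (t : TopologicalSpace α) (A : Set α)
    (B : Set ι) :
    openCount (addIsolated ι t) (Sum.inl '' A ∪ Sum.inr '' B) = openCount t A * 2 ^ B.ncard := by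
  have : {u | IsOpen[addIsolated ι t] u ∧ u ⊆ Sum.inl '' A ∪ Sum.inr '' B} =
      sumEquiv.symm '' ({u | IsOpen[t] u ∧ u ⊆ A} ×ˢ 𝒫 B) := by
    ext u
    obtain ⟨⟨v, w⟩, rfl⟩ := sumEquiv.symm.surjective u
    rw [show Sum.inl '' A ∪ Sum.inr '' B = sumEquiv.symm (A, B) from rfl, mem_ofPred_eq,
      sumEquiv.symm.injective.mem_set_image]
    have hopen : IsOpen[addIsolated ι t] (sumEquiv.symm (v, w)) ↔ IsOpen[t] v := by
      rw [addIsolated, isOpen_coinduced, show Sum.inl ⁻¹' sumEquiv.symm (v, w) = v by ext; simp]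
    rw [hopen, sumEquiv.symm.le_iff_le]
    simp [and_assoc]
  rw [openCount, this, ncard_image_of_injective _ sumEquiv.symm.injective, ncard_prod,
    ncard_powerset, openCount]

theorem openCount_univ_addIsolated {ι : Type*} [Finite ι] (t : TopologicalSpace α) :
    openCount (addIsolated ι t) univ = openCount t univ * 2 ^ Nat.card ι := by
  have h := openCount_addIsolated t univ (univ : Set ι)
  rwa [image_univ, image_univ, range_inl_union_range_inr, ncard_univ] at h

theorem openCount_addIsolated_inl {ι : Type*} [Finite ι] (t : TopologicalSpace α) (A : Set α) :
    openCount (addIsolated ι t) (Sum.inl '' A) = openCount t A := by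
  simpa using openCount_addIsolated t A (∅ : Set ι)

theorem openCount_addIsolated_inr {ι : Type*} [Finite ι] (t : TopologicalSpace α) (B : Set ι) :
    openCount (addIsolated ι t) (Sum.inr '' B) = 2 ^ B.ncard := by
  simpa [openCount_empty] using openCount_addIsolated t ∅ B

/-- The topology on `Option α` obtained from `t` by adjoining the point `none`: an open set
containing `none` has to contain `D`, and an open set not containing `none` has to lie in `U`.
For `D = ∅` this adds `openCount t U` open sets; for `D = U = univ` it adds just one. -/
abbrev adjoinPoint (t : TopologicalSpace α) (D U : Set α) : TopologicalSpace (Option α) where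
  IsOpen S := IsOpen[t] (some ⁻¹' S) ∧ (none ∈ S → D ⊆ some ⁻¹' S) ∧ (none ∉ S → some ⁻¹' S ⊆ U)
  isOpen_univ := ⟨by simp, by simp, by simp⟩
  isOpen_inter S T := by
    rintro ⟨hS, hSD, hSU⟩ ⟨hT, hTD, hTU⟩
    refine ⟨hS.inter hT, fun h => subset_inter (hSD h.1) (hTD h.2), fun h => ?_⟩
    by_cases hn : none ∈ S
    · exact inter_subset_right.trans (hTU fun h' => h ⟨hn, h'⟩)
    · exact inter_subset_left.trans (hSU hn)
  isOpen_sUnion 𝒮 h𝒮 := by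
    rw [preimage_sUnion]
    refine ⟨isOpen_biUnion fun S hS => (h𝒮 S hS).1, ?_, fun hn => ?_⟩
    · rintro ⟨S, hS, hn⟩
      exact ((h𝒮 S hS).2.1 hn).trans (subset_biUnion_of_mem (u := fun S => some ⁻¹' S) hS)
    · exact iUnion₂_subset fun S hS => (h𝒮 S hS).2.2 fun h => hn ⟨S, hS, h⟩

theorem isOpen_adjoinPoint_image {t : TopologicalSpace α} {D U u : Set α} :
    IsOpen[adjoinPoint t D U] (some '' u) ↔ IsOpen[t] u ∧ u ⊆ U := by
  change IsOpen[t] (some ⁻¹' (some '' u)) ∧ _ ↔ _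
  simp [preimage_image_eq _ (Option.some_injective α)]

theorem isOpen_adjoinPoint_insert {t : TopologicalSpace α} {D U u : Set α} :
    IsOpen[adjoinPoint t D U] (insert none (some '' u)) ↔ IsOpen[t] u ∧ D ⊆ u := by
  have : some ⁻¹' insert none (some '' u) = u := by ext; simp
  change IsOpen[t] (some ⁻¹' insert none (some '' u)) ∧ _ ↔ _
  simp [this]

theorem exists_eq_image_some_or_insert_none (S : Set (Option α)) :
    ∃ u, S = some '' u ∨ S = insert none (some '' u) := by
  refine ⟨some ⁻¹' S, ?_⟩
  by_cases hn : none ∈ S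
  · exact .inr (by ext (_ | x) <;> simp [hn])
  · exact .inl (by ext (_ | x) <;> simp [hn])

theorem openCount_adjoinPoint_image (t : TopologicalSpace α) (D U W : Set α) :
    openCount (adjoinPoint t D U) (some '' W) = openCount t (W ∩ U) := by
  have : {S | IsOpen[adjoinPoint t D U] S ∧ S ⊆ some '' W} =
      image some '' {u | IsOpen[t] u ∧ u ⊆ W ∩ U} := by
    ext S
    constructor
    · rintro ⟨hS, hSW⟩
      obtain ⟨u, rfl⟩ := subset_range_iff_exists_image_eq.1 (hSW.trans (image_subset_range _ _))
      rw [isOpen_adjoinPoint_image] at hS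
      rw [image_subset_image_iff (Option.some_injective α)] at hSW
      exact ⟨u, ⟨hS.1, subset_inter hSW hS.2⟩, rfl⟩
    · rintro ⟨u, ⟨hu, huW⟩, rfl⟩
      exact ⟨isOpen_adjoinPoint_image.2 ⟨hu, huW.trans inter_subset_right⟩,
        image_mono (huW.trans inter_subset_left)⟩
  rw [openCount, this, ncard_image_of_injective _ (Option.some_injective α).image_injective,
    openCount]

theorem openCount_adjoinPoint_insert [Finite α] (t : TopologicalSpace α) (D U W : Set α) :
    openCount (adjoinPoint t D U) (insert none (some '' W)) =
      {u | IsOpen[t] u ∧ D ⊆ u ∧ u ⊆ W}.ncard + openCount t (W ∩ U) := by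
  have hinj : Function.Injective fun u : Set α => insert none (some '' u) := fun u v h => by
    ext x
    simpa using congrArg (some x ∈ ·) h
  have : {S | IsOpen[adjoinPoint t D U] S ∧ S ⊆ insert none (some '' W)} =
      (fun u => insert none (some '' u)) '' {u | IsOpen[t] u ∧ D ⊆ u ∧ u ⊆ W} ∪
        {S | IsOpen[adjoinPoint t D U] S ∧ S ⊆ some '' W} := by
    ext S
    obtain ⟨u, rfl | rfl⟩ := exists_eq_image_some_or_insert_none S
    · have hne (v : Set α) : insert none (some '' v) ≠ some '' u := fun h => by
        simpa using congrArg (none ∈ ·) h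
      simp [isOpen_adjoinPoint_image, hne, subset_insert_iff_of_notMem]
    · have hW : ¬ insert none (some '' u) ⊆ some '' W := fun h => by simpa using h (mem_insert _ _)
      simp [isOpen_adjoinPoint_insert, hinj.eq_iff, hW, insert_subset_insert_iff, and_assoc,
        preimage_image_eq _ (Option.some_injective α)]
  rw [openCount, this, ncard_union_eq, ncard_image_of_injective _ hinj, ← openCount,
    openCount_adjoinPoint_image]
  refine disjoint_left.2 ?_
  rintro _ ⟨u, -, rfl⟩ ⟨-, h⟩
  simpa using h (mem_insert _ _)

theorem openCount_adjoinPoint_empty_insert [Finite α] (t : TopologicalSpace α) (U W : Set α) :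
    openCount (adjoinPoint t ∅ U) (insert none (some '' W)) =
      openCount t W + openCount t (W ∩ U) := by
  rw [openCount_adjoinPoint_insert]
  simp only [empty_subset, true_and, openCount]

theorem openCount_univ_adjoinPoint_empty [Finite α] (t : TopologicalSpace α) (U : Set α) :
    openCount (adjoinPoint t ∅ U) univ = openCount t univ + openCount t U := by
  rw [← insert_none_range_some, ← image_univ, openCount_adjoinPoint_empty_insert, univ_inter]

theorem openCount_univ_adjoinPoint_univ [Finite α] (t : TopologicalSpace α) :
    openCount (adjoinPoint t univ univ) univ = openCount t univ + 1 := by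
  have : {u | IsOpen[t] u ∧ univ ⊆ u ∧ u ⊆ univ} = {univ} := by
    ext u
    simpa [univ_subset_iff] using fun h : u = univ => h ▸ @isOpen_univ _ t
  rw [← insert_none_range_some, ← image_univ, openCount_adjoinPoint_insert, this, ncard_singleton,
    univ_inter, add_comm]

theorem card_isOpen_induced (t : TopologicalSpace α) {f : β → α} (hf : f.Surjective) :
    Nat.card {s // IsOpen[t.induced f] s} = openCount t univ := by
  have : {s | IsOpen[t.induced f] s} = preimage f '' {u | IsOpen[t] u ∧ u ⊆ univ} := by
    ext s
    simp [isOpen_induced_iff]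
  change {s | IsOpen[t.induced f] s}.ncard = _
  rw [this, ncard_image_of_injective _ hf.preimage_injective, openCount]

/-- For every `w ∈ M` there is a subset of `S` containing exactly `w` open sets, and these subsets
are nested. They are indexed by all of `ℕ`, the values outside `M` being irrelevant; nestedness
makes the intersection of two marked sets a marked set. -/
def HasMarks (t : TopologicalSpace α) (S : Set α) (M : Set ℕ) : Prop :=
  ∃ A : ℕ → Set α, Monotone A ∧ (∀ w, A w ⊆ S) ∧ ∀ w ∈ M, openCount t (A w) = w

theorem HasMarks.mono_set {t : TopologicalSpace α} {S S' : Set α} {M : Set ℕ}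
    (h : HasMarks t S M) (hS : S ⊆ S') : HasMarks t S' M := by
  obtain ⟨A, hA, hAS, hAM⟩ := h
  exact ⟨A, hA, fun w => (hAS w).trans hS, hAM⟩

theorem HasMarks.image {t : TopologicalSpace α} {t' : TopologicalSpace β} {S : Set α} {M : Set ℕ}
    (h : HasMarks t S M) (f : α → β) (hf : ∀ W ⊆ S, openCount t' (f '' W) = openCount t W) :
    HasMarks t' univ M := by
  obtain ⟨A, hA, hAS, hAM⟩ := h
  exact ⟨fun w => f '' A w, fun _ _ hvw => image_mono (hA hvw), fun _ => subset_univ _,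
    fun w hw => (hf _ (hAS w)).trans (hAM w hw)⟩

theorem HasMarks.adjoinPoint {t : TopologicalSpace α} {U : Set α} {M : Set ℕ}
    (h : HasMarks t U M) (D : Set α) : HasMarks (adjoinPoint t D U) univ M :=
  h.image some fun W hW => by rw [openCount_adjoinPoint_image, inter_eq_left.2 hW]

theorem HasMarks.addIsolated {t : TopologicalSpace α} {S : Set α} {M : Set ℕ}
    (h : HasMarks t S M) (ι : Type*) [Finite ι] : HasMarks (addIsolated ι t) univ M :=
  h.image Sum.inl fun W _ => openCount_addIsolated_inl t W

theorem hasMarks_one_three_five {t : TopologicalSpace α} {S W₃ W₅ : Set α} (h : W₃ ⊆ W₅)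
    (hS : W₅ ⊆ S) (h₃ : openCount t W₃ = 3) (h₅ : openCount t W₅ = 5) :
    HasMarks t S {1, 3, 5} := by
  refine ⟨fun w => if w < 3 then ∅ else if w < 5 then W₃ else W₅, ?_, ?_, ?_⟩
  · intro v w hvw
    grind
  · grind
  · simp [openCount_empty, h₃, h₅]

theorem hasMarks_adjoinPoint_addIsolated [Finite α] {ι : Type*} [Finite ι] (t : TopologicalSpace α)
    {U : Set (α ⊕ ι)} {Z : Set ι} (hZ : 1 < Z.ncard) (hZU : Disjoint (Sum.inr '' Z) U) :
    HasMarks (adjoinPoint (addIsolated ι t) ∅ U) (insert none (some '' (Sum.inr '' Z)))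
      {1, 3, 5} := by
  obtain ⟨x, hx, y, hy, hxy⟩ := (one_lt_ncard (toFinite Z)).1 hZ
  have hcount {B : Set ι} (hB : B ⊆ Z) :
      openCount (adjoinPoint (addIsolated ι t) ∅ U) (insert none (some '' (Sum.inr '' B))) =
        2 ^ B.ncard + 1 := by
    rw [openCount_adjoinPoint_empty_insert, openCount_addIsolated_inr,
      (hZU.mono_left (image_mono hB)).inter_eq, openCount_empty]
  have hxZ : {x} ⊆ Z := by simpa
  have hxyZ : {x, y} ⊆ Z := by simp [insert_subset_iff, hx, hy]
  refine hasMarks_one_three_five (W₃ := insert none (some '' (Sum.inr '' {x})))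
    (W₅ := insert none (some '' (Sum.inr '' {x, y}))) ?_ ?_ ?_ ?_
  · gcongr; simp
  · gcongr
  · rw [hcount hxZ, ncard_singleton]; rfl
  · rw [hcount hxyZ, ncard_pair hxy]; rfl

/-- Some space with at most `n` points has exactly `k` open sets and marked subsets with numbers
`M`, to which further points can be attached. -/
def Realizable (M : Set ℕ) (n k : ℕ) : Prop :=
  ∃ (α : Type) (_ : Finite α) (t : TopologicalSpace α),
    Nat.card α ≤ n ∧ openCount t univ = k ∧ HasMarks t univ M

namespace Realizable

variable {M : Set ℕ} {m n k : ℕ}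

theorem mono (h : Realizable M m k) (hmn : m ≤ n) : Realizable M n k := by
  obtain ⟨α, hα, t, hm, ht⟩ := h
  exact ⟨α, hα, t, hm.trans hmn, ht⟩

theorem zero_one : Realizable {1} 0 1 := by
  have h : openCount (⊥ : TopologicalSpace Empty) univ = 1 := by
    rw [univ_eq_empty_iff.2 inferInstance, openCount_empty]
  exact ⟨Empty, inferInstance, ⊥, by simp, h, fun _ => univ, monotone_const,
    fun _ => Subset.rfl, by simpa using h⟩

theorem succ (h : Realizable M n k) : Realizable M (n + 1) (k + 1) := by
  obtain ⟨α, _, t, hn, rfl, hM⟩ := h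
  exact ⟨Option α, inferInstance, adjoinPoint t univ univ, by simpa using hn,
    openCount_univ_adjoinPoint_univ t, hM.adjoinPoint univ⟩

theorem double (h : Realizable M n k) : Realizable M (n + 1) (2 * k) := by
  obtain ⟨α, _, t, hn, rfl, hM⟩ := h
  refine ⟨α ⊕ Unit, inferInstance, addIsolated Unit t, by simpa using hn, ?_, hM.addIsolated Unit⟩
  rw [openCount_univ_addIsolated, Nat.card_unique, pow_one, mul_comm]

theorem adjoin_point (h : Realizable M n k) {w j : ℕ} (hw : w ∈ M) (hj : 2 ≤ j) :
    Realizable {1, 3, 5} (n + j + 1) (2 ^ j * k + w) := by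
  obtain ⟨α, _, t, hn, rfl, A, -, -, hA⟩ := h
  let U : Set (α ⊕ Fin j) := Sum.inl '' A w
  have hmarks : HasMarks (adjoinPoint (addIsolated (Fin j) t) ∅ U) univ {1, 3, 5} :=
    (hasMarks_adjoinPoint_addIsolated (Z := univ) t (by simpa using Nat.lt_of_succ_le hj)
      (by simp [U, disjoint_left])).mono_set (subset_univ _)
  refine ⟨Option (α ⊕ Fin j), inferInstance, adjoinPoint (addIsolated (Fin j) t) ∅ U,
    by simpa using hn, ?_, hmarks⟩
  rw [openCount_univ_adjoinPoint_empty, openCount_univ_addIsolated, openCount_addIsolated_inl,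
    Nat.card_fin, hA w hw, mul_comm]

theorem adjoin_two_points (h : Realizable M n k) {u v b c j : ℕ} (hu : u ∈ M) (hv : v ∈ M)
    (hc : 2 ≤ c) (hbc : b + c ≤ j) :
    Realizable {1, 3, 5} (n + j + 2) (2 ^ j * k + 2 ^ b * u + 2 ^ c * v + min u v) := by
  obtain ⟨α, _, t, hn, rfl, A, hAmono, -, hA⟩ := h
  obtain ⟨B, -, hB⟩ : ∃ B ⊆ (univ : Set (Fin j)), B.ncard = b :=
    exists_subset_card_eq (by simpa using by omega)
  obtain ⟨C, hCB, hC⟩ : ∃ C ⊆ Bᶜ, C.ncard = c :=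
    exists_subset_card_eq (by rw [ncard_compl, hB, Nat.card_fin]; omega)
  have hBC : Disjoint B C := (disjoint_compl_right_iff_subset.2 Subset.rfl).mono_right hCB
  let t₀ := addIsolated (Fin j) t
  let U : Set (α ⊕ Fin j) := Sum.inl '' A u ∪ Sum.inr '' B
  let V : Set (α ⊕ Fin j) := Sum.inl '' A v ∪ Sum.inr '' C
  have hUV : V ∩ U = Sum.inl '' A (min u v) := by
    rw [hAmono.map_inf]
    ext (x | y)
    · simp [U, V, and_comm]
    · simpa [U, V] using fun hC hB => disjoint_left.1 hBC hB hC
  have hmin : min u v ∈ M := by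
    obtain h | h := min_choice u v <;> rwa [h]
  have hCU : Disjoint (Sum.inr '' C) U := by
    rw [disjoint_union_right, disjoint_image_iff Sum.inr_injective]
    exact ⟨disjoint_image_inl_image_inr.symm, hBC.symm⟩
  let t₁ := adjoinPoint t₀ ∅ U
  let W := insert none (some '' V)
  have hmarks : HasMarks t₁ W {1, 3, 5} :=
    (hasMarks_adjoinPoint_addIsolated t (hC ▸ hc) hCU).mono_set
      (insert_subset_insert (image_mono subset_union_right))
  refine ⟨Option (Option (α ⊕ Fin j)), inferInstance, adjoinPoint t₁ ∅ W, by simpa using hn, ?_,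
    hmarks.adjoinPoint ∅⟩
  rw [openCount_univ_adjoinPoint_empty, openCount_univ_adjoinPoint_empty,
    openCount_adjoinPoint_empty_insert, hUV, openCount_univ_addIsolated, openCount_addIsolated,
    openCount_addIsolated, openCount_addIsolated_inl, hA u hu, hA v hv, hA _ hmin, hB, hC,
    Nat.card_fin]
  ring

theorem exists_topologicalSpace_fin (h : Realizable M n k) (hk : 2 ≤ k) :
    ∃ t : TopologicalSpace (Fin n), Nat.card {s : Set (Fin n) // t.IsOpen s} = k := by
  obtain ⟨α, _, t, hn, rfl, -⟩ := h
  have : Nonempty α := by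
    by_contra! hα
    rw [univ_eq_empty_iff.2 hα, openCount_empty] at hk
    omega
  let g : α ↪ Fin n := (Finite.equivFin α).toEmbedding.trans (Fin.castLEEmb hn)
  exact ⟨t.induced (Function.invFun g),
    card_isOpen_induced t (Function.invFun_surjective g.injective)⟩

theorem four_mul_add (h : Realizable {1, 3, 5} n k) {r : ℕ} (hr : r < 4) :
    Realizable {1, 3, 5} (n + 3) (4 * k + r) := by
  interval_cases r
  · simpa [← mul_assoc] using h.double.double.mono (Nat.le_succ _)
  · exact h.adjoin_point (j := 2) (by simp) le_rfl
  · simpa [mul_add, ← mul_assoc] using h.double.succ.double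
  · exact h.adjoin_point (j := 2) (by simp) le_rfl

end Realizable

end Topology

theorem exists_eq_add_of_pow_mul_le {p i n x c : ℕ} (hc : c < p * x) (h : p ^ i * x ≤ c * p ^ n) :
    ∃ n', n = n' + i ∧ x ≤ c * p ^ n' := by
  have hp : 0 < p := Nat.pos_of_mul_pos_right (c.zero_le.trans_lt hc)
  have hin : i ≤ n := by
    by_contra! hni
    have := calc
      c * p ^ n < p * x * p ^ n := by gcongr
      _ = p ^ (n + 1) * x := by ring
      _ ≤ p ^ i * x := by gcongr; exact hni
    omega
  obtain ⟨n', rfl⟩ := Nat.exists_eq_add_of_le' hin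
  refine ⟨n', rfl, Nat.le_of_mul_le_mul_left ?_ (pow_pos hp i)⟩
  calc p ^ i * x ≤ c * p ^ (n' + i) := h
    _ = p ^ i * (c * p ^ n') := by ring

theorem exists_realizable_of_lt_twenty {k : ℕ} (hk : 5 ≤ k) (hk' : k < 20) :
    ∃ i, Realizable {1, 3, 5} (i + 2) k ∧ 7 * 4 ^ i < 4 * k ^ 3 := by
  -- The inequality says `7 * 4 ^ (i - 1) < k ^ 3`, so that `k ^ 3 ≤ 7 * 4 ^ m` forces `i ≤ m`.
  have two_pow_add_one {j : ℕ} (hj : 2 ≤ j) : Realizable {1, 3, 5} (j + 1) (2 ^ j + 1) := by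
    simpa using Realizable.zero_one.adjoin_point rfl hj
  have five : Realizable {1, 3, 5} 3 5 := two_pow_add_one (j := 2) (by norm_num)
  have nine : Realizable {1, 3, 5} 4 9 := two_pow_add_one (j := 3) (by norm_num)
  have seventeen : Realizable {1, 3, 5} 5 17 := two_pow_add_one (j := 4) (by norm_num)
  interval_cases k
  · exact ⟨1, five, by norm_num⟩
  · exact ⟨2, five.succ, by norm_num⟩
  · exact ⟨3, five.succ.succ, by norm_num⟩
  · exact ⟨4, five.succ.succ.succ, by norm_num⟩
  · exact ⟨2, nine, by norm_num⟩
  · exact ⟨2, five.double, by norm_num⟩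
  · exact ⟨3, five.double.succ, by norm_num⟩
  · exact ⟨3, five.succ.double, by norm_num⟩
  · exact ⟨4, five.succ.double.succ, by norm_num⟩
  · exact ⟨4, five.succ.succ.double, by norm_num⟩
  · exact ⟨5, five.succ.succ.double.succ, by norm_num⟩
  · exact ⟨5, five.succ.succ.succ.double, by norm_num⟩
  · exact ⟨3, seventeen, by norm_num⟩
  · exact ⟨4, seventeen.succ, by norm_num⟩
  · exact ⟨5, seventeen.succ.succ, by norm_num⟩

theorem realizable_of_cube_le {k m : ℕ} (hk : 5 ≤ k) (h : k ^ 3 ≤ 7 * 4 ^ m) :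
    Realizable {1, 3, 5} (m + 2) k := by
  induction k using Nat.strong_induction_on generalizing m with
  | _ k ih =>
  by_cases hk' : k < 20
  · obtain ⟨i, hi, hik⟩ := exists_realizable_of_lt_twenty hk hk'
    have him : 4 ^ i < 4 ^ (m + 1) := by rw [pow_succ]; omega
    have := (Nat.pow_lt_pow_iff_right (by norm_num)).1 him
    exact hi.mono (by omega)
  · have hb : 5 ≤ k / 4 := by omega
    have hb' : 4 ^ 3 * (k / 4) ^ 3 ≤ 7 * 4 ^ m :=
      calc 4 ^ 3 * (k / 4) ^ 3 = (4 * (k / 4)) ^ 3 := (mul_pow ..).symm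
        _ ≤ k ^ 3 := by gcongr; exact Nat.mul_div_le k 4
        _ ≤ 7 * 4 ^ m := h
    have hc : 7 < 4 * (k / 4) ^ 3 := by nlinarith [Nat.pow_le_pow_left hb 3]
    obtain ⟨m', rfl, hm'⟩ := exists_eq_add_of_pow_mul_le hc hb'
    rw [← Nat.div_add_mod k 4]
    exact (ih _ (by omega) hb hm').four_mul_add (Nat.mod_lt _ (by norm_num))

theorem exists_eq_two_pow_mul_add_of_mod_eight {k : ℕ} (hk : 415 ≤ k) (hk7 : k % 8 = 7) :
    ∃ a u v b c, 5 ≤ a ∧ u ∈ ({1, 3, 5} : Set ℕ) ∧ v ∈ ({1, 3, 5} : Set ℕ) ∧ 2 ≤ c ∧ b + c ≤ 6 ∧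
      k = 2 ^ 6 * a + 2 ^ b * u + 2 ^ c * v + min u v := by
  have mod_cases : k % 64 = 7 ∨ k % 64 = 15 ∨ k % 64 = 23 ∨ k % 64 = 31 ∨ k % 64 = 39 ∨
      k % 64 = 47 ∨ k % 64 = 55 ∨ k % 64 = 63 := by omega
  rcases mod_cases with h | h | h | h | h | h | h | h
  · exact ⟨k / 64, 1, 1, 1, 2, by grind⟩
  · exact ⟨k / 64, 3, 1, 1, 3, by grind⟩
  · exact ⟨k / 64, 3, 1, 1, 4, by grind⟩
  · -- the last three summands add up to `95 = 64 + 31`, hence the bound `415 = 64 * 5 + 95`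
    exact ⟨k / 64 - 1, 3, 5, 2, 4, by grind⟩
  · exact ⟨k / 64, 3, 1, 1, 5, by grind⟩
  · exact ⟨k / 64, 5, 3, 2, 3, by grind⟩
  · exact ⟨k / 64, 3, 5, 2, 3, by grind⟩
  · exact ⟨k / 64, 3, 3, 2, 4, by grind⟩

theorem cube_le_of_pow_four_le {k m : ℕ} (hk : k ≤ 415) (h : k ^ 4 ≤ 8 ^ m) :
    k ^ 3 ≤ 7 * 4 ^ m := by
  obtain hm | hm := lt_or_ge m 12
  · refine (Nat.pow_le_pow_iff_left (n := 4) (by norm_num)).1 ?_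
    calc (k ^ 3) ^ 4 = (k ^ 4) ^ 3 := by ring
      _ ≤ (8 ^ m) ^ 3 := by gcongr
      _ = 2 ^ m * (4 ^ m) ^ 4 := by
        rw [← pow_mul, ← pow_mul, mul_comm m 3, mul_comm m 4, pow_mul, pow_mul, ← mul_pow]
        norm_num
      _ ≤ 2 ^ 11 * (4 ^ m) ^ 4 := by gcongr <;> omega
      _ ≤ 7 ^ 4 * (4 ^ m) ^ 4 := Nat.mul_le_mul_right _ (by norm_num)
      _ = (7 * 4 ^ m) ^ 4 := (mul_pow ..).symm
  · calc k ^ 3 ≤ 415 ^ 3 := by gcongr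
      _ ≤ 7 * 4 ^ 12 := by norm_num
      _ ≤ 7 * 4 ^ m := by gcongr; norm_num

theorem exists_eq_add_of_pow_four_le {a i j m k : ℕ} (ha : 0 < a) (hij : 8 ^ i ≤ (2 ^ j) ^ 4)
    (hk : 2 ^ j * a ≤ k) (h : k ^ 4 ≤ 8 ^ m) : ∃ m', m = m' + i ∧ a ^ 4 ≤ 8 ^ m' := by
  have hm : 8 ^ i * a ^ 4 ≤ 1 * 8 ^ m :=
    calc 8 ^ i * a ^ 4 ≤ (2 ^ j) ^ 4 * a ^ 4 := by gcongr
      _ = (2 ^ j * a) ^ 4 := (mul_pow ..).symm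
      _ ≤ k ^ 4 := by gcongr
      _ ≤ 1 * 8 ^ m := by rwa [one_mul]
  simpa using exists_eq_add_of_pow_mul_le (by have := pow_pos ha 4; omega) hm

theorem realizable_of_pow_four_le {k m : ℕ} (hk : 5 ≤ k) (h : k ^ 4 ≤ 8 ^ m) :
    Realizable {1, 3, 5} (m + 2) k := by
  induction k using Nat.strong_induction_on generalizing m with
  | _ k ih =>
  by_cases hk' : k < 415
  · exact realizable_of_cube_le hk (cube_le_of_pow_four_le hk'.le h)
  have mod_cases : k % 2 = 0 ∨ k % 8 ∈ ({1, 3, 5} : Set ℕ) ∨ k % 8 = 7 := by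
    simp only [Set.mem_insert_iff, Set.mem_singleton_iff]
    omega
  obtain heven | hmark | hseven := mod_cases
  · obtain ⟨m', rfl, hm'⟩ := exists_eq_add_of_pow_four_le (a := k / 2) (i := 1) (j := 1)
      (by omega) (by norm_num) (by omega) h
    have hk2 : 2 * (k / 2) = k := by omega
    exact hk2 ▸ (ih (k / 2) (by omega) (by omega) hm').double
  · obtain ⟨m', rfl, hm'⟩ := exists_eq_add_of_pow_four_le (a := k / 8) (i := 4) (j := 3)
      (by omega) (by norm_num) (by omega) h
    exact Nat.div_add_mod k 8 ▸
      (ih (k / 8) (by omega) (by omega) hm').adjoin_point (j := 3) hmark (by norm_num)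
  · obtain ⟨a, u, v, b, c, ha, hu, hv, hc, hbc, rfl⟩ :=
      exists_eq_two_pow_mul_add_of_mod_eight (not_lt.1 hk') hseven
    obtain ⟨m', rfl, hm'⟩ := exists_eq_add_of_pow_four_le (a := a) (i := 8) (j := 6)
      (by omega) (by norm_num) (by omega) h
    exact (ih a (by omega) ha hm').adjoin_two_points hu hv hc hbc

/-- For all integers `n ≥ 2` and `k` with `2 ≤ k` and `k ^ 4 ≤ 2 ^ (3 * (n - 2))`,
there exists a topology on a set of `n` points having exactly `k` open sets. -/
theorem T_pos_of_le_two_pow (n k : ℕ) (hn : 2 ≤ n) (hk : 2 ≤ k)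
    (hkn : k ^ 4 ≤ 2 ^ (3 * (n - 2))) :
    ∃ t : TopologicalSpace (Fin n), Nat.card {s : Set (Fin n) // t.IsOpen s} = k := by
  obtain ⟨m, rfl⟩ := Nat.exists_eq_add_of_le' hn
  rw [Nat.add_sub_cancel, pow_mul] at hkn
  by_cases hk5 : 5 ≤ k
  · exact (realizable_of_pow_four_le hk5 hkn).exists_topologicalSpace_fin hk
  have hm : m ≠ 0 := by
    rintro rfl
    have := Nat.pow_le_pow_left hk 4
    omega
  have small : Realizable {1} 3 k := by
    interval_cases k
    · exact Realizable.zero_one.succ.mono (by norm_num)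
    · exact Realizable.zero_one.succ.succ.mono (by norm_num)
    · exact Realizable.zero_one.succ.succ.succ
  exact (small.mono (by omega)).exists_topologicalSpace_fin hk
end

section
/- For every integer k ≥ 2, there exists a natural number n with n ≤ 2·⌊log₂ k⌋ and a topological space on a set of n points having exactly k open sets. (Equivalently, m(k) ≤ 2·⌊log₂ k⌋.) -/
/-!
Read the binary expansion of `k` from the top digit, starting with the empty space, which has one
open set. Adding an isolated point doubles the number of open sets, and adding a point whose only
neighbourhood is the whole space increases it by one. Each binary digit after the leading one thus
costs at most two points, and there are `⌊log₂ k⌋` such digits.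
-/

open TopologicalSpace

section Opens

variable (X Y : Type*) [TopologicalSpace X] [TopologicalSpace Y]

theorem card_opens : Nat.card (Opens X) = Nat.card {s : Set X // IsOpen s} :=
  Nat.card_congr
    { toFun U := ⟨U, U.isOpen⟩
      invFun s := ⟨s, s.2⟩ }

/-- An open set of a disjoint union, as the pair of its traces on the two summands. -/
def opensSumEquiv : Opens (X ⊕ Y) ≃ Opens X × Opens Y where
  toFun U := (U.comap ⟨Sum.inl, continuous_inl⟩, U.comap ⟨Sum.inr, continuous_inr⟩)
  invFun p := ⟨Sum.inl '' p.1 ∪ Sum.inr '' p.2,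
    (isOpenMap_inl _ p.1.isOpen).union (isOpenMap_inr _ p.2.isOpen)⟩
  left_inv U := by ext (x | y) <;> simp
  right_inv p := by ext <;> simp

theorem card_opens_sum : Nat.card (Opens (X ⊕ Y)) = Nat.card (Opens X) * Nat.card (Opens Y) := by
  rw [Nat.card_congr (opensSumEquiv X Y), Nat.card_prod]

/-- The open extension topology: the open sets are those of `X` together with the whole space, so
that the only neighbourhood of the new point `none` is the whole space. -/
abbrev openExtension : TopologicalSpace (Option X) :=
  .coinduced some ‹_› ⊔ nhdsAdjoint none ⊤

attribute [local instance] openExtension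

variable {X} in
theorem isOpen_openExtension_iff {s : Set (Option X)} :
    IsOpen s ↔ IsOpen (some ⁻¹' s) ∧ (none ∈ s → s = Set.univ) :=
  isOpen_sup.trans <| and_congr isOpen_coinduced <| imp_congr_right fun _ => Filter.mem_top

theorem isOpenMap_some_openExtension : IsOpenMap (some : X → Option X) := fun s hs => by
  simpa [isOpen_openExtension_iff, Set.preimage_image_eq _ (Option.some_injective X)] using hs

open Classical in
/-- An open set of the open extension is either the whole space, encoded as `none`, or an open set
of `X`. -/
noncomputable def opensOpenExtensionEquiv : Opens (Option X) ≃ Option (Opens X) where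
  toFun U := if none ∈ U then none else some ⟨some ⁻¹' U, (isOpen_openExtension_iff.1 U.isOpen).1⟩
  invFun o := o.elim ⊤ fun V => ⟨some '' V, isOpenMap_some_openExtension X _ V.isOpen⟩
  left_inv U := by
    by_cases hU : none ∈ U
    · simpa [hU, eq_comm (a := ⊤)] using (isOpen_openExtension_iff.1 U.isOpen).2 hU
    · ext (_ | x) <;> simp [hU]
  right_inv o := by
    rcases o with _ | V
    · simp
    · simp [← SetLike.mem_coe, Set.preimage_image_eq _ (Option.some_injective X)]

theorem card_opens_openExtension [Finite (Opens X)] :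
    Nat.card (Opens (Option X)) = Nat.card (Opens X) + 1 := by
  rw [Nat.card_congr (opensOpenExtensionEquiv X), Finite.card_option]

end Opens

/-- `k` is the number of open sets of some topology on `n` points. The bound topology takes
precedence over the discrete one that `Fin n` carries by default. -/
def IsOpenCount (n k : ℕ) : Prop :=
  ∃ _ : TopologicalSpace (Fin n), Nat.card (Opens (Fin n)) = k

theorem isOpenCount_card (X : Type*) [Finite X] [TopologicalSpace X] :
    IsOpenCount (Nat.card X) (Nat.card (Opens X)) :=
  let e := (Finite.equivFin X).symm
  letI := e.topologicalSpace
  ⟨_, Nat.card_congr e.homeomorph.opensCongr.toEquiv⟩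

namespace IsOpenCount

variable {m n k l : ℕ}

theorem zero_one : IsOpenCount 0 1 := by
  simpa using isOpenCount_card Empty

theorem add_mul (hk : IsOpenCount m k) (hl : IsOpenCount n l) : IsOpenCount (m + n) (k * l) := by
  obtain ⟨_, rfl⟩ := hk
  obtain ⟨_, rfl⟩ := hl
  simpa only [card_opens_sum, Nat.card_sum, Nat.card_fin] using isOpenCount_card (Fin m ⊕ Fin n)

theorem succ (h : IsOpenCount n k) : IsOpenCount (n + 1) (k + 1) := by
  obtain ⟨_, rfl⟩ := h
  let _ := openExtension (Fin n)
  simpa only [card_opens_openExtension, Finite.card_option, Nat.card_fin] using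
    isOpenCount_card (Option (Fin n))

theorem two_mul (h : IsOpenCount n k) : IsOpenCount (n + 1) (2 * k) :=
  mul_comm k 2 ▸ h.add_mul zero_one.succ

end IsOpenCount

theorem exists_isOpenCount_le_two_mul_log {k : ℕ} (hk : k ≠ 0) :
    ∃ n ≤ 2 * Nat.log 2 k, IsOpenCount n k := by
  induction k using Nat.binaryRecFromOne with
  | zero => contradiction
  | one => exact ⟨0, by simp, .zero_one⟩
  | bit b k hk₀ ih =>
    obtain ⟨n, hn, h⟩ := ih hk₀
    have hlog : Nat.log 2 (Nat.bit b k) = Nat.log 2 k + 1 := by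
      rw [Nat.log_of_one_lt_of_le one_lt_two (by grind [Nat.bit_val]), Nat.bit_div_two]
    cases b
    · exact ⟨n + 1, by lia, h.two_mul⟩
    · exact ⟨n + 2, by lia, h.two_mul.succ⟩

/-- For every integer `k ≥ 2`, there exists a natural number `n ≤ 2 * ⌊log₂ k⌋`
and a topology on a set of `n` points having exactly `k` open sets. -/
theorem m_le_two_log (k : ℕ) (hk : 2 ≤ k) :
    ∃ n : ℕ, n ≤ 2 * Nat.log 2 k ∧
      ∃ t : TopologicalSpace (Fin n), Nat.card {s : Set (Fin n) // t.IsOpen s} = k := by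
  obtain ⟨n, hn, t, hcard⟩ := exists_isOpenCount_le_two_mul_log (Nat.ne_zero_of_lt hk)
  exact ⟨n, hn, t, (card_opens (Fin n)).symm.trans hcard⟩
end

section
/- For all integers n ≥ 1 and k with 2 ≤ k and k³ ≤ 2^{2(n−1)}, there exists a topological space on a set of n points having exactly k open sets. (Equivalently, T(n,k) > 0 for all k in [2, 2^{2(n−1)/3}], i.e., f(n) > 2^{2(n−1)/3}.) -/
/-!
Let `Y` be a finite space with a marked subset `B`, let `M` be the number of open sets contained in
`B`, and let `s` be the number of the others. Stack `Y` on a space `X` with `j` open sets by letting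
`U ⊔ V` be open when `U` and `V` are open and either `V ⊆ B` or `U = X`. The result has `M * j + s`
open sets, so the pair `(Y, B)` (a *gadget*) acts as the affine map `j ↦ M * j + s`. Stacking
gadgets composes these maps, disjoint unions multiply both the numbers `M` and the totals `M + s`,
and in either case the numbers of points add up.

Call a gadget on `q` points cheap if `4 ^ q ≤ M ^ 3`, and a number `k` cheap if it is the number of
open sets of a space on `p` points with `4 ^ p ≤ 4 * k ^ 3`. Cheap gadgets preserve cheap numbers,
so it suffices that every `k` is congruent to `s` modulo `M` for some cheap gadget with `s` zero or
cheap. All the gadgets needed are built from points and from the maps `j ↦ 2 ^ r * j + 1`, which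
take `r + 1` points. Such a map exceeds the allowance of `3 * r / 2` points by `1 - r / 2`, so a
combination is cheap when these excesses sum to at most zero.
-/

open Set Topology

section OpenSets

variable {X Y : Type*}

theorem ncard_sumEquiv_preimage (S : Set (Set X × Set Y)) :
    (sumEquiv ⁻¹' S : Set (Set (X ⊕ Y))).ncard = S.ncard :=
  ncard_preimage_of_injective_subset_range sumEquiv.injective
    (sumEquiv.surjective.range_eq ▸ subset_univ S)

theorem subset_sumEquiv_symm_iff {A : Set X} {B : Set Y} {W : Set (X ⊕ Y)} :
    W ⊆ sumEquiv.symm (A, B) ↔ Sum.inl ⁻¹' W ⊆ A ∧ Sum.inr ⁻¹' W ⊆ B :=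
  sumEquiv.le_symm_apply

variable [tX : TopologicalSpace X] [TopologicalSpace Y]

theorem ncard_setOf_isOpen_induced {Z : Type*} {f : Z → X} (hf : f.Surjective) :
    {s | IsOpen[tX.induced f] s}.ncard = {U : Set X | IsOpen U}.ncard :=
  ncard_image_of_injective {U : Set X | IsOpen U} hf.preimage_injective

theorem ncard_setOf_isOpen_sum :
    {W : Set (X ⊕ Y) | IsOpen W}.ncard =
      {U : Set X | IsOpen U}.ncard * {V : Set Y | IsOpen V}.ncard := by
  have h : {W : Set (X ⊕ Y) | IsOpen W} =
      sumEquiv ⁻¹' ({U : Set X | IsOpen U} ×ˢ {V : Set Y | IsOpen V}) :=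
    ext fun _ => isOpen_sum_iff
  rw [h, ncard_sumEquiv_preimage, ncard_prod]

theorem ncard_setOf_isOpen_subset_sum (A : Set X) (B : Set Y) :
    {W : Set (X ⊕ Y) | IsOpen W ∧ W ⊆ sumEquiv.symm (A, B)}.ncard =
      {U : Set X | IsOpen U ∧ U ⊆ A}.ncard * {V : Set Y | IsOpen V ∧ V ⊆ B}.ncard := by
  have h : {W : Set (X ⊕ Y) | IsOpen W ∧ W ⊆ sumEquiv.symm (A, B)} =
      sumEquiv ⁻¹' ({U : Set X | IsOpen U ∧ U ⊆ A} ×ˢ {V : Set Y | IsOpen V ∧ V ⊆ B}) := by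
    ext W
    exact (and_congr isOpen_sum_iff subset_sumEquiv_symm_iff).trans and_and_and_comm
  rw [h, ncard_sumEquiv_preimage, ncard_prod]

/-- The topology on `X ⊕ Y` that stacks `Y` on top of `X` outside `B`: its open sets are those of
the disjoint union whose trace on `Y` is contained in `B` or whose trace on `X` is everything. -/
abbrev stack (X : Type*) [TopologicalSpace X] (B : Set Y) : TopologicalSpace (X ⊕ Y) where
  IsOpen W := IsOpen W ∧ (Sum.inr ⁻¹' W ⊆ B ∨ Sum.inl ⁻¹' W = univ)
  isOpen_univ := ⟨isOpen_univ, Or.inr rfl⟩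
  isOpen_inter := by
    rintro W W' ⟨hW, hB | hX⟩ ⟨hW', hB' | hX'⟩
    · exact ⟨hW.inter hW', Or.inl (inter_subset_left.trans hB)⟩
    · exact ⟨hW.inter hW', Or.inl (inter_subset_left.trans hB)⟩
    · exact ⟨hW.inter hW', Or.inl (inter_subset_right.trans hB')⟩
    · exact ⟨hW.inter hW', Or.inr (by rw [preimage_inter, hX, hX', inter_univ])⟩
  isOpen_sUnion := by
    intro S hS
    refine ⟨isOpen_sUnion fun W hW => (hS W hW).1, ?_⟩
    by_cases h : ∃ W ∈ S, Sum.inl ⁻¹' W = (univ : Set X)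
    · obtain ⟨W, hW, hX⟩ := h
      exact Or.inr (univ_subset_iff.1 (hX ▸ preimage_mono (subset_sUnion_of_mem hW)))
    · push Not at h
      refine Or.inl ?_
      rw [preimage_sUnion]
      exact iUnion₂_subset fun W hW => (hS W hW).2.resolve_right (h W hW)

theorem ncard_setOf_isOpen_stack [Finite X] [Finite Y] (B : Set Y) :
    {W | IsOpen[stack X B] W}.ncard =
      {U : Set X | IsOpen U}.ncard * {V : Set Y | IsOpen V ∧ V ⊆ B}.ncard +
        {V : Set Y | IsOpen V ∧ ¬ V ⊆ B}.ncard := by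
  have h : {W | IsOpen[stack X B] W} = sumEquiv ⁻¹'
      ({U : Set X | IsOpen U} ×ˢ {V : Set Y | IsOpen V ∧ V ⊆ B} ∪
        {univ} ×ˢ {V : Set Y | IsOpen V ∧ ¬ V ⊆ B}) := by
    ext W
    change (IsOpen W ∧ (Sum.inr ⁻¹' W ⊆ B ∨ Sum.inl ⁻¹' W = univ)) ↔
      (IsOpen (Sum.inl ⁻¹' W) ∧ IsOpen (Sum.inr ⁻¹' W) ∧ Sum.inr ⁻¹' W ⊆ B) ∨
        (Sum.inl ⁻¹' W = univ ∧ IsOpen (Sum.inr ⁻¹' W) ∧ ¬ Sum.inr ⁻¹' W ⊆ B)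
    have hX : Sum.inl ⁻¹' W = univ → IsOpen (Sum.inl ⁻¹' W) := fun h => h ▸ isOpen_univ
    rw [isOpen_sum_iff]
    tauto
  have hdisj : Disjoint {V : Set Y | IsOpen V ∧ V ⊆ B} {V : Set Y | IsOpen V ∧ ¬ V ⊆ B} :=
    disjoint_left.2 fun _ h h' => h'.2 h.2
  rw [h, ncard_sumEquiv_preimage, ncard_union_eq (hdisj.set_prod_right _ _), ncard_prod, ncard_prod,
    ncard_singleton, one_mul]

theorem ncard_setOf_isOpen_stack_subset (A : Set X) (B : Set Y) :
    {W | IsOpen[stack X B] W ∧ W ⊆ sumEquiv.symm (A, B)}.ncard =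
      {U : Set X | IsOpen U ∧ U ⊆ A}.ncard * {V : Set Y | IsOpen V ∧ V ⊆ B}.ncard := by
  rw [← ncard_setOf_isOpen_subset_sum]
  congr 1
  ext W
  refine and_congr_left fun hW => and_iff_left (Or.inl ?_)
  exact (subset_sumEquiv_symm_iff.1 hW).2

theorem ncard_setOf_isOpen_eq_add [Finite X] (A : Set X) :
    {U : Set X | IsOpen U}.ncard =
      {U : Set X | IsOpen U ∧ U ⊆ A}.ncard + {U : Set X | IsOpen U ∧ ¬ U ⊆ A}.ncard :=
  (ncard_inter_add_ncard_sdiff_eq_ncard {U : Set X | IsOpen U} {U | U ⊆ A}).symm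

end OpenSets

section TopologySizes

/-- `IsTopologySize n k` says that some topology on `n` points has exactly `k` open sets, that is,
`T(n,k) > 0`. -/
def IsTopologySize (n k : ℕ) : Prop :=
  ∃ t : TopologicalSpace (Fin n), Nat.card {s : Set (Fin n) // t.IsOpen s} = k

theorem isTopologySize_ncard_of_surjective {X : Type*} [tX : TopologicalSpace X] {n : ℕ}
    {f : Fin n → X} (hf : f.Surjective) : IsTopologySize n {U : Set X | IsOpen U}.ncard :=
  ⟨tX.induced f, ncard_setOf_isOpen_induced hf⟩

theorem IsTopologySize.mono {m n k : ℕ} (h : IsTopologySize m k) (hk : 2 ≤ k) (hmn : m ≤ n) :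
    IsTopologySize n k := by
  obtain ⟨t, rfl⟩ := h
  have : Nonempty (Fin m) := by
    obtain ⟨U, V, hUV⟩ := (Finite.one_lt_card_iff_nontrivial.1 hk).exists_pair_ne
    by_contra hm
    rw [not_nonempty_iff] at hm
    exact hUV (Subsingleton.elim U V)
  exact isTopologySize_ncard_of_surjective
    (Function.invFun_surjective (Fin.castLE_injective hmn))

end TopologySizes

section Gadgets

/-- `IsGadget p M s` says that some space with `p` points has `M + s` open sets, exactly `M` of
which are contained in a marked subset `A`. It encodes the affine map `j ↦ M * j + s`. -/
def IsGadget (p M s : ℕ) : Prop :=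
  ∃ (X : Type) (_ : Finite X) (_ : TopologicalSpace X) (A : Set X), Nat.card X = p ∧
    {U : Set X | IsOpen U ∧ U ⊆ A}.ncard = M ∧ {U : Set X | IsOpen U}.ncard = M + s

variable {p q M N s t j k : ℕ}

theorem IsGadget.isTopologySize (h : IsGadget p M s) : IsTopologySize p (M + s) := by
  obtain ⟨X, _, _, A, rfl, -, hX⟩ := h
  exact hX ▸ isTopologySize_ncard_of_surjective (Finite.equivFin X).symm.surjective

theorem IsTopologySize.isGadget (h : IsTopologySize p k) : IsGadget p k 0 := by
  obtain ⟨t, rfl⟩ := h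
  refine ⟨Fin p, inferInstance, t, univ, Nat.card_fin p, ?_, rfl⟩
  simp only [subset_univ, and_true]
  rfl

theorem IsGadget.comp (hY : IsGadget p M s) (hX : IsGadget q N t) :
    IsGadget (p + q) (M * N) (M * t + s) := by
  obtain ⟨Y, _, _, B, rfl, rfl, hY⟩ := hY
  obtain ⟨X, _, _, A, rfl, rfl, hX⟩ := hX
  refine ⟨X ⊕ Y, inferInstance, stack X B, sumEquiv.symm (A, B), ?_, ?_, ?_⟩
  · rw [Nat.card_sum, add_comm]
  · rw [ncard_setOf_isOpen_stack_subset, mul_comm]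
  · rw [ncard_setOf_isOpen_eq_add B, Nat.add_left_cancel_iff] at hY
    rw [ncard_setOf_isOpen_stack, hX, hY]
    ring

theorem IsGadget.prod (hX : IsGadget p M s) (hY : IsGadget q N t) :
    IsGadget (p + q) (M * N) (M * t + s * N + s * t) := by
  obtain ⟨X, _, _, A, rfl, rfl, hX⟩ := hX
  obtain ⟨Y, _, _, B, rfl, rfl, hY⟩ := hY
  refine ⟨X ⊕ Y, inferInstance, inferInstance, sumEquiv.symm (A, B), Nat.card_sum,
    ncard_setOf_isOpen_subset_sum A B, ?_⟩
  rw [ncard_setOf_isOpen_sum, hX, hY]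
  ring

theorem IsGadget.apply (h : IsGadget p M s) (hj : IsTopologySize q j) :
    IsTopologySize (p + q) (M * j + s) := by
  simpa only [mul_zero, zero_add] using (h.comp hj.isGadget).isTopologySize

theorem isGadget_two_pow_zero (r : ℕ) : IsGadget r (2 ^ r) 0 :=
  ⟨Fin r, inferInstance, inferInstance, univ, Nat.card_fin r, by simp, by simp⟩

theorem isGadget_one_one : IsGadget 1 1 1 :=
  ⟨Unit, inferInstance, inferInstance, ∅, Nat.card_unique, by simp, by simp⟩

theorem isGadget_two_pow_one (r : ℕ) : IsGadget (1 + r) (2 ^ r) 1 := by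
  simpa only [one_mul, mul_zero, zero_add] using isGadget_one_one.comp (isGadget_two_pow_zero r)

theorem isGadget_8_7 : IsGadget 5 8 7 :=
  (isGadget_two_pow_one 1).prod (isGadget_two_pow_one 2)

theorem isGadget_16_7 : IsGadget 6 16 7 :=
  isGadget_8_7.comp (isGadget_two_pow_zero 1)

end Gadgets

section Cheap

variable {M s j : ℕ}

/-- `k` is cheap if it is the number of open sets of a topology on at most `1 + (3 / 2) * log₂ k`
points. -/
def IsCheapSize (k : ℕ) : Prop :=
  ∃ p, 4 ^ p ≤ 4 * k ^ 3 ∧ IsTopologySize p k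

/-- The map `j ↦ M * j + s` is cheap if it comes from a gadget on at most `(3 / 2) * log₂ M`
points. -/
def IsCheapGadget (M s : ℕ) : Prop :=
  ∃ q, 4 ^ q ≤ M ^ 3 ∧ IsGadget q M s

theorem IsCheapGadget.apply (hg : IsCheapGadget M s) (hj : IsCheapSize j) :
    IsCheapSize (M * j + s) := by
  obtain ⟨q, hq, hg⟩ := hg
  obtain ⟨p, hp, hj⟩ := hj
  refine ⟨q + p, ?_, hg.apply hj⟩
  calc 4 ^ (q + p) = 4 ^ q * 4 ^ p := pow_add 4 q p
    _ ≤ M ^ 3 * (4 * j ^ 3) := Nat.mul_le_mul hq hp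
    _ = 4 * (M * j) ^ 3 := by ring
    _ ≤ 4 * (M * j + s) ^ 3 := by gcongr; exact Nat.le_add_right _ _

theorem isCheapGadget_2_0 : IsCheapGadget 2 0 :=
  ⟨1, by norm_num, isGadget_two_pow_zero 1⟩

theorem isCheapGadget_4_1 : IsCheapGadget 4 1 :=
  ⟨3, by norm_num, isGadget_two_pow_one 2⟩

theorem isCheapGadget_16_3 : IsCheapGadget 16 3 :=
  ⟨6, by norm_num, (isGadget_two_pow_one 1).comp (isGadget_two_pow_one 3)⟩

theorem isCheapGadget_16_7 : IsCheapGadget 16 7 :=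
  ⟨6, by norm_num, isGadget_16_7⟩

theorem isCheapGadget_16_11 : IsCheapGadget 16 11 :=
  ⟨6, by norm_num, (isGadget_two_pow_one 1).prod (isGadget_two_pow_one 3)⟩

theorem isCheapGadget_64_15 : IsCheapGadget 64 15 :=
  ⟨9, by norm_num, (isGadget_two_pow_one 1).comp (isGadget_8_7.comp (isGadget_two_pow_zero 2))⟩

theorem isCheapGadget_64_31 : IsCheapGadget 64 31 :=
  ⟨9, by norm_num,
    (isGadget_two_pow_one 2).prod ((isGadget_two_pow_one 1).comp (isGadget_two_pow_one 3))⟩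

theorem isCheapGadget_64_47 : IsCheapGadget 64 47 :=
  ⟨9, by norm_num,
    (isGadget_two_pow_one 1).prod ((isGadget_two_pow_one 2).comp (isGadget_two_pow_one 3))⟩

-- `(2 + 1) * (4 + 1) * (16 + 1) = 128 + 127`
theorem isCheapGadget_128_127 : IsCheapGadget 128 127 :=
  ⟨10, by norm_num,
    (isGadget_two_pow_one 1).prod ((isGadget_two_pow_one 2).prod (isGadget_two_pow_one 4))⟩

theorem isCheapGadget_256_63 : IsCheapGadget 256 63 :=
  ⟨12, by norm_num,
    (isGadget_two_pow_one 1).comp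
      (((isGadget_two_pow_one 1).prod ((isGadget_two_pow_one 2).comp (isGadget_two_pow_one 2))).comp
        (isGadget_two_pow_zero 2))⟩

theorem isCheapGadget_256_191 : IsCheapGadget 256 191 :=
  ⟨12, by norm_num,
    (isGadget_two_pow_one 1).prod
      ((isGadget_two_pow_one 2).comp ((isGadget_two_pow_one 2).comp (isGadget_two_pow_one 3)))⟩

theorem isTopologySize_4_7 : IsTopologySize 4 7 :=
  (isGadget_two_pow_one 1).apply (isGadget_two_pow_one 1).isTopologySize

theorem isTopologySize_5_15 : IsTopologySize 5 15 :=
  isGadget_8_7.isTopologySize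

theorem isTopologySize_6_23 : IsTopologySize 6 23 :=
  isGadget_16_7.isTopologySize

theorem isCheapSize_1 : IsCheapSize 1 :=
  ⟨0, by norm_num, (isGadget_two_pow_zero 0).isTopologySize⟩

theorem isCheapSize_3 : IsCheapSize 3 :=
  ⟨2, by norm_num, (isGadget_two_pow_one 1).isTopologySize⟩

theorem isCheapSize_7 : IsCheapSize 7 :=
  ⟨4, by norm_num, isTopologySize_4_7⟩

theorem isCheapSize_11 : IsCheapSize 11 :=
  ⟨5, by norm_num, (isGadget_two_pow_one 1).apply (isGadget_two_pow_one 2).isTopologySize⟩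

theorem isCheapSize_15 : IsCheapSize 15 :=
  ⟨5, by norm_num, isTopologySize_5_15⟩

theorem isCheapSize_31 : IsCheapSize 31 :=
  ⟨7, by norm_num, (isGadget_two_pow_one 1).apply isTopologySize_5_15⟩

theorem isCheapSize_47 : IsCheapSize 47 :=
  ⟨8, by norm_num, (isGadget_two_pow_one 1).apply isTopologySize_6_23⟩

theorem isCheapSize_63 : IsCheapSize 63 :=
  ⟨9, by norm_num, isGadget_8_7.apply isTopologySize_4_7⟩

theorem isCheapSize_127 : IsCheapSize 127 :=
  ⟨10, by norm_num, isGadget_8_7.apply isTopologySize_5_15⟩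

theorem isCheapSize_191 : IsCheapSize 191 :=
  ⟨11, by norm_num, isGadget_8_7.apply isTopologySize_6_23⟩

theorem exists_isCheapGadget_mod (k : ℕ) :
    ∃ M, 2 ≤ M ∧ IsCheapGadget M (k % M) ∧ (k % M = 0 ∨ IsCheapSize (k % M)) := by
  have residues : k % 2 = 0 ∨ k % 4 = 1 ∨ k % 16 = 3 ∨ k % 16 = 7 ∨ k % 16 = 11 ∨
      k % 64 = 15 ∨ k % 64 = 31 ∨ k % 64 = 47 ∨ k % 128 = 127 ∨ k % 256 = 63 ∨ k % 256 = 191 := by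
    omega
  rcases residues with h | h | h | h | h | h | h | h | h | h | h
  · exact ⟨2, by norm_num, h ▸ isCheapGadget_2_0, Or.inl h⟩
  · exact ⟨4, by norm_num, h ▸ isCheapGadget_4_1, Or.inr (h ▸ isCheapSize_1)⟩
  · exact ⟨16, by norm_num, h ▸ isCheapGadget_16_3, Or.inr (h ▸ isCheapSize_3)⟩
  · exact ⟨16, by norm_num, h ▸ isCheapGadget_16_7, Or.inr (h ▸ isCheapSize_7)⟩
  · exact ⟨16, by norm_num, h ▸ isCheapGadget_16_11, Or.inr (h ▸ isCheapSize_11)⟩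
  · exact ⟨64, by norm_num, h ▸ isCheapGadget_64_15, Or.inr (h ▸ isCheapSize_15)⟩
  · exact ⟨64, by norm_num, h ▸ isCheapGadget_64_31, Or.inr (h ▸ isCheapSize_31)⟩
  · exact ⟨64, by norm_num, h ▸ isCheapGadget_64_47, Or.inr (h ▸ isCheapSize_47)⟩
  · exact ⟨128, by norm_num, h ▸ isCheapGadget_128_127, Or.inr (h ▸ isCheapSize_127)⟩
  · exact ⟨256, by norm_num, h ▸ isCheapGadget_256_63, Or.inr (h ▸ isCheapSize_63)⟩
  · exact ⟨256, by norm_num, h ▸ isCheapGadget_256_191, Or.inr (h ▸ isCheapSize_191)⟩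

theorem isCheapSize_of_pos {k : ℕ} (hk : 0 < k) : IsCheapSize k := by
  induction k using Nat.strong_induction_on with
  | _ k ih =>
    obtain ⟨M, hM, hgadget, hresidue⟩ := exists_isCheapGadget_mod k
    rcases Nat.lt_or_ge k M with hkM | hMk
    · rw [Nat.mod_eq_of_lt hkM] at hresidue
      exact hresidue.resolve_left hk.ne'
    · have hquot : IsCheapSize (k / M) :=
        ih _ (Nat.div_lt_self hk hM) (Nat.div_pos hMk (by omega))
      exact Nat.div_add_mod k M ▸ hgadget.apply hquot

end Cheap

/-- For all integers `n ≥ 1` and `k` with `2 ≤ k` and `k ^ 3 ≤ 2 ^ (2 * (n - 1))`,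
there exists a topology on a set of `n` points having exactly `k` open sets. -/
theorem T_pos_doubles (n k : ℕ) (hn : 1 ≤ n) (hk : 2 ≤ k)
    (hkn : k ^ 3 ≤ 2 ^ (2 * (n - 1))) :
    ∃ t : TopologicalSpace (Fin n), Nat.card {s : Set (Fin n) // t.IsOpen s} = k := by
  obtain ⟨p, hp, hsize⟩ := isCheapSize_of_pos (k := k) (by omega)
  rw [pow_mul] at hkn
  have hpn : 4 ^ p ≤ 4 ^ n :=
    calc 4 ^ p ≤ 4 * k ^ 3 := hp
      _ ≤ 4 * 4 ^ (n - 1) := Nat.mul_le_mul_left 4 hkn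
      _ = 4 ^ n := mul_pow_sub_one (by omega) 4
  exact hsize.mono hk ((Nat.pow_le_pow_iff_right (by norm_num)).1 hpn)
end

section
/- Let k ≥ 2 be an integer, and suppose there exists a topology on a set of n points having exactly k open sets. Then there exists a natural number n' ≤ n and a T₀ topology on a set of n' points having exactly k open sets. Consequently, m(k) is also the minimum number of points on which there exists a T₀ topology with exactly k open sets. -/
/-!
Identifying topologically indistinguishable points (the Kolmogorov quotient) yields a `T₀` space
with no more points. The quotient map is surjective and inducing, so taking preimages under it is
a bijection between open sets. The minima agree because every cardinality carrying a topology with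
`k` open sets thus dominates one carrying a `T₀` topology with `k` open sets.
-/

open Function Topology

theorem card_isOpen_eq_of_isInducing_of_surjective {X Y : Type*} [TopologicalSpace X]
    [TopologicalSpace Y] {f : X → Y} (hind : IsInducing f) (hsurj : Surjective f) :
    Nat.card {s : Set Y // IsOpen s} = Nat.card {s : Set X // IsOpen s} := by
  have himage : Set.preimage f '' {s | IsOpen s} = {s | IsOpen s} :=
    Set.ext fun _ => hind.isOpen_iff.symm
  calc
    Nat.card {s : Set Y // IsOpen s} = Nat.card (Set.preimage f '' {s | IsOpen s}) :=
      (Nat.card_image_of_injective hsurj.preimage_injective _).symm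
    _ = Nat.card {s : Set X // IsOpen s} := Nat.card_congr (Equiv.setCongr himage)

theorem exists_fin_homeomorph (X : Type*) [TopologicalSpace X] [Finite X] :
    ∃ _ : TopologicalSpace (Fin (Nat.card X)), Nonempty (X ≃ₜ Fin (Nat.card X)) :=
  let e := (Finite.equivFin X).symm
  letI := TopologicalSpace.induced e inferInstance
  ⟨this, ⟨(e.toHomeomorphOfIsInducing ⟨rfl⟩).symm⟩⟩

theorem exists_t0Space_fin_card_isOpen_eq (X : Type*) [TopologicalSpace X] [Finite X] :
    ∃ n ≤ Nat.card X, ∃ _ : TopologicalSpace (Fin n), T0Space (Fin n) ∧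
      Nat.card {s : Set (Fin n) // IsOpen s} = Nat.card {s : Set X // IsOpen s} := by
  have hsurj : Surjective (SeparationQuotient.mk (X := X)) := SeparationQuotient.surjective_mk
  have : Finite (SeparationQuotient X) := .of_surjective _ hsurj
  obtain ⟨t, ⟨e⟩⟩ := exists_fin_homeomorph (SeparationQuotient X)
  exact ⟨_, Nat.card_le_card_of_surjective _ hsurj, t, e.t0Space,
    card_isOpen_eq_of_isInducing_of_surjective
      (e.isInducing.comp SeparationQuotient.isInducing_mk) (e.surjective.comp hsurj)⟩

/-- If `k ≥ 2` and there is a topology on `n` points with exactly `k` open sets,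
then there is some `n' ≤ n` and a `T₀` topology on `n'` points with exactly `k`
open sets.  Consequently, the least number of points carrying a topology with
`k` open sets equals the least number of points carrying a `T₀` topology with
`k` open sets. -/
theorem m_eq_m_T0 (k n : ℕ) (hk : 2 ≤ k) (t : TopologicalSpace (Fin n))
    (h : Nat.card {s : Set (Fin n) // t.IsOpen s} = k) :
    (∃ n' ≤ n, ∃ t' : TopologicalSpace (Fin n'),
        @T0Space (Fin n') t' ∧ Nat.card {s : Set (Fin n') // t'.IsOpen s} = k) ∧
      sInf {m : ℕ | ∃ t' : TopologicalSpace (Fin m),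
          Nat.card {s : Set (Fin m) // t'.IsOpen s} = k} =
        sInf {m : ℕ | ∃ t' : TopologicalSpace (Fin m),
          @T0Space (Fin m) t' ∧ Nat.card {s : Set (Fin m) // t'.IsOpen s} = k} := by
  constructor
  · obtain ⟨n', hn', t', ht0, hcard⟩ := exists_t0Space_fin_card_isOpen_eq (Fin n)
    exact ⟨n', hn'.trans_eq (Nat.card_fin n), t', ht0, hcard.trans h⟩
  · refine csInf_eq_csInf_of_forall_exists_le ?_ ?_
    · rintro m ⟨u, hu⟩
      obtain ⟨m', hm', u', hu0, hcard⟩ := exists_t0Space_fin_card_isOpen_eq (Fin m)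
      exact ⟨m', ⟨u', hu0, hcard.trans hu⟩, hm'.trans_eq (Nat.card_fin m)⟩
    · rintro m ⟨u, -, hu⟩
      exact ⟨m, ⟨u, hu⟩, le_rfl⟩
end

section
/- Let P be a finite partially ordered set and x ∈ P. Then j(P) = j(P ∖ {x}) + j(P_x), where P ∖ {x} is the subposet obtained by removing the single element x, and P_x is the subposet of all elements of P that are incomparable to x (i.e., all y with neither y ≤ x nor x ≤ y). -/
/-!
Split the lower sets `I` according to whether `x` is a maximal element of `I`. It is one exactly
when `I` lies between the principal lower set of `x` and the complement of `{y | x < y}`. The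
lower sets in an interval `[A, B]` correspond to the lower sets of `B \ A`, here the elements
incomparable to `x`.

If `x` is not maximal in `I`, then `x ∈ I` only when a larger element of `I` forces it, so `I` is
generated by `I \ {x}`. The lower sets generated by their trace on a subset `S` correspond to the
lower sets of `S`, here `P \ {x}`.
-/

open Cardinal

/-- The passage from lower sets as sets with a property to Mathlib's bundled `LowerSet`, whose
lattice operations and closure operator are used for the bijections below. -/
def isLowerSetEquivLowerSet (α : Type*) [LE α] : {I : Set α // IsLowerSet I} ≃ LowerSet α where
  toFun I := ⟨I.1, I.2⟩
  invFun I := ⟨I, I.lower⟩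

section Preorder

variable {α : Type*} [Preorder α]

/-- The trace `I ∩ S` of a lower set `I` on a subset `S`, as a lower set of the induced order. -/
def lowerSetTrace (S : Set α) (I : LowerSet α) : LowerSet S :=
  ⟨Subtype.val ⁻¹' (I : Set α), I.lower.preimage (Subtype.mono_coe S)⟩

lemma image_val_lowerSetTrace (S : Set α) (I : LowerSet α) :
    Subtype.val '' (lowerSetTrace S I : Set S) = ↑I ∩ S := by
  rw [Set.inter_comm]
  exact Subtype.image_preimage_coe S I

lemma lowerSetTrace_lowerClosure_image_val {S : Set α} (K : LowerSet S) :
    lowerSetTrace S (lowerClosure (Subtype.val '' (K : Set S))) = K := by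
  ext y
  constructor
  · rintro ⟨_, ⟨z, hz, rfl⟩, hyz⟩
    exact K.lower hyz hz
  · exact fun hy => subset_lowerClosure ⟨y, hy, rfl⟩

/-- The correspondence, by taking traces, between the lower sets generated by their trace on `S`
and the lower sets of `S`. -/
def generatedByTraceEquiv (S : Set α) :
    {I : LowerSet α // lowerClosure (↑I ∩ S) = I} ≃ LowerSet S where
  toFun I := lowerSetTrace S I
  invFun K := ⟨lowerClosure (Subtype.val '' (K : Set S)), by
    rw [← image_val_lowerSetTrace, lowerSetTrace_lowerClosure_image_val]⟩
  left_inv I := Subtype.ext <| by simp only [image_val_lowerSetTrace, I.2]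
  right_inv := lowerSetTrace_lowerClosure_image_val

lemma sup_lowerClosure_inter_sdiff {A B I : LowerSet α} (hI : I ∈ Set.Icc A B) :
    A ⊔ lowerClosure (↑I ∩ (↑B \ ↑A)) = I := by
  apply le_antisymm
  · exact sup_le hI.1 (lowerClosure_le.2 Set.inter_subset_left)
  · intro y hy
    by_cases hA : y ∈ A
    · exact Or.inl hA
    · exact Or.inr (subset_lowerClosure ⟨hy, hI.2 hy, hA⟩)

lemma sup_lowerClosure_mem_Icc {A B : LowerSet α} {s : Set α} (hAB : A ≤ B) (hs : s ⊆ B) :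
    A ⊔ lowerClosure s ∈ Set.Icc A B :=
  ⟨le_sup_left, sup_le hAB (lowerClosure_le.2 hs)⟩

lemma lowerSetTrace_sup_eq_right {S : Set α} {A I : LowerSet α} (hA : Disjoint (A : Set α) S) :
    lowerSetTrace S (A ⊔ I) = lowerSetTrace S I := by
  ext y
  exact or_iff_right fun hy => Set.disjoint_left.1 hA hy y.2

/-- The correspondence, by taking traces, between the lower sets in the interval `[A, B]` and the
lower sets of `B \ A`. -/
def iccEquivLowerSetSdiff {A B : LowerSet α} (hAB : A ≤ B) :
    Set.Icc A B ≃ LowerSet ↥((B : Set α) \ A) where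
  toFun I := lowerSetTrace _ I
  invFun K := ⟨A ⊔ lowerClosure (Subtype.val '' (K : Set ↥((B : Set α) \ A))),
    sup_lowerClosure_mem_Icc hAB (Subtype.coe_image_subset _ _ |>.trans Set.sdiff_subset)⟩
  left_inv I := Subtype.ext <| by
    simp only [image_val_lowerSetTrace, sup_lowerClosure_inter_sdiff I.2]
  right_inv K :=
    (lowerSetTrace_sup_eq_right Set.disjoint_sdiff_right).trans
      (lowerSetTrace_lowerClosure_image_val K)

lemma maximal_mem_lowerSet_iff_mem_Icc {I : LowerSet α} {x : α} :
    Maximal (· ∈ I) x ↔ I ∈ Set.Icc (LowerSet.Iic x) (UpperSet.Ioi x).compl := by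
  rw [maximal_iff_forall_gt, Set.mem_Icc, LowerSet.Iic_le]
  exact and_congr_right fun _ => forall_congr' fun _ => imp_not_comm

lemma Iic_le_compl_Ioi (x : α) : LowerSet.Iic x ≤ (UpperSet.Ioi x).compl :=
  fun _ hyx hxy => hxy.not_ge hyx

lemma compl_Ioi_sdiff_Iic (x : α) :
    ((UpperSet.Ioi x).compl : Set α) \ LowerSet.Iic x = {y | ¬ y ≤ x ∧ ¬ x ≤ y} := by
  ext y
  change ¬ x < y ∧ ¬ y ≤ x ↔ ¬ y ≤ x ∧ ¬ x ≤ y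
  rw [lt_iff_le_not_ge]
  tauto

/-- The correspondence, by taking traces, between the lower sets having `x` as a maximal element
and the lower sets of the elements incomparable to `x`. -/
def maximalMemEquivLowerSetIncomparable (x : α) :
    {I : LowerSet α // Maximal (· ∈ I) x} ≃ LowerSet {y : α // ¬ y ≤ x ∧ ¬ x ≤ y} :=
  (Equiv.subtypeEquivRight fun _ => maximal_mem_lowerSet_iff_mem_Icc).trans <|
    (iccEquivLowerSetSdiff (Iic_le_compl_Ioi x)).trans
      (LowerSet.map (OrderIso.setCongr _ _ (compl_Ioi_sdiff_Iic x))).toEquiv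

end Preorder

section PartialOrder

variable {α : Type*} [PartialOrder α]

lemma lowerClosure_inter_ne_eq_self_iff {I : LowerSet α} {x : α} :
    lowerClosure (↑I ∩ {y | y ≠ x}) = I ↔ ¬ Maximal (· ∈ I) x := by
  constructor
  · intro hI hx
    have hx' : x ∈ lowerClosure (↑I ∩ {y | y ≠ x}) := hI.symm ▸ hx.prop
    obtain ⟨z, ⟨hz, hzx⟩, hxz⟩ := hx'
    exact hzx (hx.eq_of_le hz hxz).symm
  · intro hx
    refine le_antisymm (lowerClosure_le.2 Set.inter_subset_left) fun y hy => ?_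
    obtain rfl | hyx := eq_or_ne y x
    · obtain ⟨z, hyz, hz⟩ := (not_maximal_iff_exists_gt hy).1 hx
      exact ⟨z, ⟨hz, hyz.ne'⟩, hyz.le⟩
    · exact subset_lowerClosure ⟨hy, hyx⟩

/-- The correspondence, by taking traces, between the lower sets not having `x` as a maximal
element and the lower sets of the order with `x` removed. -/
def notMaximalMemEquivLowerSetNe (x : α) :
    {I : LowerSet α // ¬ Maximal (· ∈ I) x} ≃ LowerSet {y : α // y ≠ x} :=
  (Equiv.subtypeEquivRight fun _ => lowerClosure_inter_ne_eq_self_iff.symm).trans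
    (generatedByTraceEquiv {y | y ≠ x})

end PartialOrder

theorem card_lowerSets_remove_elem_general (P : Type*) [PartialOrder P] (x : P) :
    #{I : Set P // IsLowerSet I} =
      #{I : Set {y : P // y ≠ x} // IsLowerSet I} +
        #{I : Set {y : P // ¬ y ≤ x ∧ ¬ x ≤ y} // IsLowerSet I} := by
  simp only [mk_congr (isLowerSetEquivLowerSet _)]
  calc #(LowerSet P)
    _ = #{I : LowerSet P // Maximal (· ∈ I) x} + #{I : LowerSet P // ¬ Maximal (· ∈ I) x} :=
      (mk_sum_compl {I : LowerSet P | Maximal (· ∈ I) x}).symm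
    _ = #(LowerSet {y : P // y ≠ x}) + #(LowerSet {y : P // ¬ y ≤ x ∧ ¬ x ≤ y}) := by
      rw [mk_congr (maximalMemEquivLowerSetIncomparable x),
        mk_congr (notMaximalMemEquivLowerSetNe x), add_comm]

/-- For a finite poset `P` and `x ∈ P`, the number of lower sets of `P` equals
the number of lower sets of `P \ {x}` plus the number of lower sets of `P_x`,
the subposet of elements incomparable to `x`. -/
theorem card_lowerSets_remove_elem (P : Type*) [Fintype P] [PartialOrder P] (x : P) :
    Nat.card {I : Set P // IsLowerSet I} =
      Nat.card {I : Set {y : P // y ≠ x} // IsLowerSet I} +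
        Nat.card {I : Set {y : P // ¬ y ≤ x ∧ ¬ x ≤ y} // IsLowerSet I} :=
  (congrArg toNat (card_lowerSets_remove_elem_general P x)).trans
    (toNat_add (lt_aleph0_of_finite _) (lt_aleph0_of_finite _))
end
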